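/- arXiv:1805.10553 — 10 statements merged into one kernel-verified Lean document; each statement's English description precedes it below -/
import Mathlib

section
/- Let z₀ > 1 and C > 0. Let f : [z₀, ∞) → ℝ be a twice continuously differentiable positive function satisfying the perturbed rotationally symmetric translator ODE −f'(z) = (1 + a(z))·f''(z)/(1 + f'(z)²) − 1/f(z) + b(z) for all z ≥ z₀, where a, b : ℝ → ℝ are continuous with |a(z)| + |b(z)| ≤ C/z^10 for all z ≥ z₀, and suppose f(z)/√(2z) → 1 as z → ∞. Then there exists Λ ≥ z₀ such that f'(z) > 0 for all z ≥ Λ; in particular f is strictly increasing on [Λ, ∞). -/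
open Set Filter

open Asymptotics

/-!
At a zero of `f'` the equation reads `(1 + a) f'' = 1 / f - b`. Since `f` grows like `√(2z)`, the
error `b` is eventually smaller than `1 / f`, so `f'' > 0` at every late zero of `f'`: once `f'` is
positive, it can never return to zero. As `f → ∞`, the mean value theorem provides arbitrarily late
points at which `f'` is positive.
-/

section FirstOrder

variable {g g' : ℝ → ℝ} {m : ℝ}

theorem nonneg_on_Ici_of_deriv_pos_of_eq_zero
    (hg : ∀ x ∈ Ici m, HasDerivWithinAt g (g' x) (Ici m) x) (hm : 0 ≤ g m)
    (hzero : ∀ x ∈ Ici m, g x = 0 → 0 < g' x) : ∀ x ∈ Ici m, 0 ≤ g x := by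
  intro x hx
  have hcont : ContinuousOn g (Icc m x) :=
    (HasDerivWithinAt.continuousOn hg).mono Icc_subset_Ici_self
  have hright : ∀ y ∈ Ico m x, HasDerivWithinAt g (g' y) (Ici y) y := fun y hy =>
    (hg y hy.1).mono (Ici_subset_Ici.2 hy.1)
  exact image_le_of_deriv_right_lt_deriv_boundary' continuousOn_const
    (fun y _ => hasDerivWithinAt_const y (Ici y) (0 : ℝ)) hm hcont hright
    (fun y hy h => hzero y hy.1 h.symm) (right_mem_Icc.2 hx)

theorem pos_on_Ici_of_deriv_pos_of_eq_zero
    (hg : ∀ x ∈ Ici m, HasDerivWithinAt g (g' x) (Ici m) x) (hm : 0 < g m)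
    (hzero : ∀ x ∈ Ici m, g x = 0 → 0 < g' x) : ∀ x ∈ Ici m, 0 < g x := by
  have hnonneg := nonneg_on_Ici_of_deriv_pos_of_eq_zero hg hm.le hzero
  intro x hx
  refine (hnonneg x hx).lt_of_ne' fun hgx => (hzero x hx hgx).ne' ?_
  have hmx : m < x := lt_of_le_of_ne hx fun h => hm.ne' (h ▸ hgx)
  have hmin : IsLocalMin g x := by
    filter_upwards [Ici_mem_nhds hmx] with y hy
    exact hgx.trans_le (hnonneg y hy)
  exact hmin.hasDerivAt_eq_zero ((hg x hx).hasDerivAt (Ici_mem_nhds hmx))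

theorem strictMonoOn_Ici_of_hasDerivWithinAt_pos
    (hg : ∀ x ∈ Ici m, HasDerivWithinAt g (g' x) (Ici m) x)
    (hpos : ∀ x ∈ Ici m, 0 < g' x) : StrictMonoOn g (Ici m) :=
  strictMonoOn_of_hasDerivWithinAt_pos (convex_Ici m) (HasDerivWithinAt.continuousOn hg)
    (fun x hx => (hg x (interior_subset hx)).mono interior_subset)
    (fun x hx => hpos x (interior_subset hx))

theorem exists_deriv_pos_of_tendsto_atTop
    (hg : ∀ x ∈ Ici m, HasDerivWithinAt g (g' x) (Ici m) x) (hlim : Tendsto g atTop atTop) :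
    ∃ x ∈ Ici m, 0 < g' x := by
  obtain ⟨y, hgy, hmy⟩ := ((hlim.eventually_gt_atTop (g m)).and (eventually_gt_atTop m)).exists
  obtain ⟨x, hx, hslope⟩ := exists_hasDerivAt_eq_slope g g' hmy
    ((HasDerivWithinAt.continuousOn hg).mono Icc_subset_Ici_self)
    (fun x hx => (hg x hx.1.le).hasDerivAt (Ici_mem_nhds hx.1))
  exact ⟨x, hx.1.le, hslope ▸ div_pos (sub_pos.2 hgy) (sub_pos.2 hmy)⟩

end FirstOrder

theorem exists_deriv_pos_on_Ici_of_second_deriv_pos_of_critical {f f' f'' : ℝ → ℝ} {z₀ : ℝ}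
    (hf : ∀ z ∈ Ici z₀, HasDerivWithinAt f (f' z) (Ici z₀) z)
    (hf' : ∀ z ∈ Ici z₀, HasDerivWithinAt f' (f'' z) (Ici z₀) z)
    (hcrit : ∀ᶠ z in atTop, f' z = 0 → 0 < f'' z) (hlim : Tendsto f atTop atTop) :
    ∃ Λ, z₀ ≤ Λ ∧ ∀ z ∈ Ici Λ, 0 < f' z := by
  obtain ⟨L, hL, hcritL⟩ := (atTop_basis' z₀).eventually_iff.1 hcrit
  have hfL : ∀ z ∈ Ici L, HasDerivWithinAt f (f' z) (Ici L) z := fun z hz =>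
    (hf z (hL.trans hz)).mono (Ici_subset_Ici.2 hL)
  obtain ⟨Λ, hLΛ, hΛ⟩ := exists_deriv_pos_of_tendsto_atTop hfL hlim
  rw [mem_Ici] at hLΛ
  have hz₀Λ : z₀ ≤ Λ := hL.trans hLΛ
  exact ⟨Λ, hz₀Λ, pos_on_Ici_of_deriv_pos_of_eq_zero
    (fun z hz => (hf' z (hz₀Λ.trans hz)).mono (Ici_subset_Ici.2 hz₀Λ)) hΛ
    (fun z hz => hcritL (hLΛ.trans hz))⟩

theorem second_deriv_pos_of_translator_ode_of_critical {y y' y'' a b : ℝ}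
    (hode : -y' = (1 + a) * y'' / (1 + y' ^ 2) - 1 / y + b)
    (ha : -1 < a) (hb : b < 1 / y) (hy' : y' = 0) : 0 < y'' := by
  subst hy'
  have hprod : (1 + a) * y'' = 1 / y - b := by
    rw [neg_zero, zero_pow two_ne_zero, add_zero, div_one] at hode
    linarith
  have hprod_pos : 0 < (1 + a) * y'' := hprod ▸ sub_pos.2 hb
  exact pos_of_mul_pos_right hprod_pos (by linarith)

section Perturbation

variable {f a b : ℝ → ℝ} {n : ℕ}

theorem isBigO_inv_pow_atTop_of_abs_le {z₀ C : ℝ} (h : ∀ z ∈ Ici z₀, |a z| ≤ C / z ^ n) :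
    a =O[atTop] fun z => (z ^ n)⁻¹ := by
  refine IsBigO.of_bound |C| ?_
  filter_upwards [eventually_ge_atTop z₀] with z hz
  calc ‖a z‖ ≤ C / z ^ n := h z hz
    _ ≤ |C / z ^ n| := le_abs_self _
    _ = |C| * ‖(z ^ n)⁻¹‖ := by rw [div_eq_mul_inv, abs_mul, Real.norm_eq_abs]

theorem isBigO_inv_pow_atTop_of_abs_add_abs_le {z₀ C : ℝ}
    (h : ∀ z ∈ Ici z₀, |a z| + |b z| ≤ C / z ^ n) :
    (a =O[atTop] fun z => (z ^ n)⁻¹) ∧ b =O[atTop] fun z => (z ^ n)⁻¹ :=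
  ⟨isBigO_inv_pow_atTop_of_abs_le fun z hz =>
      (le_add_of_nonneg_right (abs_nonneg (b z))).trans (h z hz),
    isBigO_inv_pow_atTop_of_abs_le fun z hz =>
      (le_add_of_nonneg_left (abs_nonneg (a z))).trans (h z hz)⟩

theorem eventually_neg_one_lt_of_isBigO_inv_pow (hn : n ≠ 0)
    (ha : a =O[atTop] fun z => (z ^ n)⁻¹) : ∀ᶠ z in atTop, -1 < a z :=
  (ha.trans_tendsto (tendsto_pow_atTop hn).inv_tendsto_atTop).eventually_const_lt (by norm_num)

theorem sqrt_const_mul_isLittleO_pow_atTop (c : ℝ) (hn : n ≠ 0) :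
    (fun z : ℝ => √(c * z)) =o[atTop] fun z => z ^ n := by
  have hsq : (fun z : ℝ => c * z) =o[atTop] fun z => (z ^ n) ^ 2 := by
    simpa only [pow_one, pow_mul] using
      (isLittleO_pow_pow_atTop_of_lt (𝕜 := ℝ) (show 1 < n * 2 by lia)).const_mul_left c
  refine (hsq.sqrt (.of_forall fun z => sq_nonneg (z ^ n))).congr' .rfl ?_
  filter_upwards [eventually_ge_atTop 0] with z hz
  exact Real.sqrt_sq (pow_nonneg hz n)

theorem eventually_lt_one_div_of_isLittleO {α : Type*} {l : Filter α} {u v : α → ℝ}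
    (hu : ∀ᶠ x in l, 0 < u x) (hv : v =o[l] u⁻¹) : ∀ᶠ x in l, v x < 1 / u x := by
  filter_upwards [hu, hv.def one_half_pos] with x hux hvx
  have hinv : 0 < (u x)⁻¹ := inv_pos.2 hux
  rw [Pi.inv_apply, Real.norm_of_nonneg hinv.le] at hvx
  calc v x ≤ ‖v x‖ := le_abs_self _
    _ ≤ 1 / 2 * (u x)⁻¹ := hvx
    _ < 1 / u x := by rw [one_div (u x)]; linarith

variable {c : ℝ}

theorem tendsto_atTop_of_isEquivalent_sqrt (hc : 0 < c) (hf : f ~[atTop] fun z => √(c * z)) :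
    Tendsto f atTop atTop :=
  hf.symm.tendsto_atTop (Real.tendsto_sqrt_atTop.comp (tendsto_id.const_mul_atTop hc))

theorem eventually_lt_one_div_of_isEquivalent_sqrt (hc : 0 < c) (hn : n ≠ 0)
    (hf : f ~[atTop] fun z => √(c * z)) (hb : b =O[atTop] fun z => (z ^ n)⁻¹) :
    ∀ᶠ z in atTop, b z < 1 / f z := by
  have hsqrt_ne : ∀ᶠ z : ℝ in atTop, √(c * z) = 0 → z ^ n = 0 := by
    filter_upwards [eventually_gt_atTop 0] with z hz hzero
    exact absurd hzero (by positivity)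
  have hinv : (fun z : ℝ => (z ^ n)⁻¹) =o[atTop] fun z => (√(c * z))⁻¹ :=
    (sqrt_const_mul_isLittleO_pow_atTop c hn).inv_rev hsqrt_ne
  exact eventually_lt_one_div_of_isLittleO
    ((tendsto_atTop_of_isEquivalent_sqrt hc hf).eventually_gt_atTop 0)
    ((hb.trans_isLittleO hinv).trans_isBigO hf.inv.isBigO_symm)

end Perturbation

theorem eventually_increasing_of_perturbed_translator_ode_general {z₀ : ℝ} {f f' f'' a b : ℝ → ℝ}
    (hf : ∀ z ∈ Ici z₀, HasDerivWithinAt f (f' z) (Ici z₀) z)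
    (hf' : ∀ z ∈ Ici z₀, HasDerivWithinAt f' (f'' z) (Ici z₀) z)
    (ha : ∀ᶠ z in atTop, -1 < a z) (hb : ∀ᶠ z in atTop, b z < 1 / f z)
    (hode : ∀ᶠ z in atTop,
      -f' z = (1 + a z) * f'' z / (1 + f' z ^ 2) - 1 / f z + b z)
    (hlim : Tendsto f atTop atTop) :
    ∃ Λ, z₀ ≤ Λ ∧ (∀ z ∈ Ici Λ, 0 < f' z) ∧ StrictMonoOn f (Ici Λ) := by
  have hcrit : ∀ᶠ z in atTop, f' z = 0 → 0 < f'' z := by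
    filter_upwards [ha, hb, hode] with z haz hbz hodez
    exact second_deriv_pos_of_translator_ode_of_critical hodez haz hbz
  obtain ⟨Λ, hΛ, hpos⟩ :=
    exists_deriv_pos_on_Ici_of_second_deriv_pos_of_critical hf hf' hcrit hlim
  exact ⟨Λ, hΛ, hpos, strictMonoOn_Ici_of_hasDerivWithinAt_pos
    (fun z hz => (hf z (hΛ.trans hz)).mono (Ici_subset_Ici.2 hΛ)) hpos⟩

/-- The rotationally symmetric part of the cylindrical end of the translator is
eventually increasing: a positive `C²` solution of the perturbed rotationally
symmetric translator ODE asymptotic to `√(2z)` has eventually positive derivative. -/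
theorem eventually_increasing_of_perturbed_translator_ode
    (z₀ C : ℝ) (hz₀ : 1 < z₀) (hC : 0 < C)
    (f f' f'' a b : ℝ → ℝ)
    (hf : ∀ z ∈ Ici z₀, HasDerivWithinAt f (f' z) (Ici z₀) z)
    (hf'd : ∀ z ∈ Ici z₀, HasDerivWithinAt f' (f'' z) (Ici z₀) z)
    (hf'' : ContinuousOn f'' (Ici z₀))
    (hfpos : ∀ z ∈ Ici z₀, 0 < f z)
    (ha : Continuous a) (hb : Continuous b)
    (hab : ∀ z ∈ Ici z₀, |a z| + |b z| ≤ C / z ^ 10)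
    (hode : ∀ z ∈ Ici z₀,
      -f' z = (1 + a z) * f'' z / (1 + f' z ^ 2) - 1 / f z + b z)
    (hlim : Tendsto (fun z => f z / Real.sqrt (2 * z)) atTop (nhds 1)) :
    ∃ Λ, z₀ ≤ Λ ∧ (∀ z ∈ Ici Λ, 0 < f' z) ∧ StrictMonoOn f (Ici Λ) := by
  have hequiv : f ~[atTop] fun z => √(2 * z) := isEquivalent_of_tendsto_one hlim
  obtain ⟨ha_decay, hb_decay⟩ := isBigO_inv_pow_atTop_of_abs_add_abs_le hab
  exact eventually_increasing_of_perturbed_translator_ode_general hf hf'd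
    (eventually_neg_one_lt_of_isBigO_inv_pow (by norm_num) ha_decay)
    (eventually_lt_one_div_of_isEquivalent_sqrt two_pos (by norm_num) hequiv hb_decay)
    (eventually_atTop.2 ⟨z₀, hode⟩) (tendsto_atTop_of_isEquivalent_sqrt two_pos hequiv)
end

section
/- There exists s₁ ≥ s₀ such that φ(s) ≤ s + 1/s⁹ for all s ≥ s₁. -/
open Set Filter

/-!
Along `φ s = s` the right-hand side is `(1 + s ^ 2) * (γ s - δ s * s)`, which tends to `0`, and above
that line the term `(1 + φ s ^ 2) * (1 - φ s / s) ≤ 0` outweighs the growth of the perturbation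
in `φ s`. So `φ - id` decreases at a definite rate wherever it is nonnegative: it must reach
`(-∞, 0]`, and it cannot leave afterwards. This gives even `φ s ≤ s` for large `s`.
-/

section Trapping

variable {f f' : ℝ → ℝ} {a : ℝ}

lemma nonpos_of_hasDerivAt_neg_of_eq_zero (hf : ∀ x ≥ a, HasDerivAt f (f' x) x)
    (hneg : ∀ x ≥ a, f x = 0 → f' x < 0) (ha : f a ≤ 0) {x : ℝ} (hx : a ≤ x) : f x ≤ 0 :=
  image_le_of_deriv_right_lt_deriv_boundary (B := fun _ ↦ 0) (B' := fun _ ↦ 0)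
    (fun y hy ↦ (hf y hy.1).continuousAt.continuousWithinAt)
    (fun y hy ↦ (hf y hy.1).hasDerivWithinAt) ha (fun y ↦ hasDerivAt_const y 0)
    (fun y hy ↦ hneg y hy.1) (right_mem_Icc.2 hx)

lemma le_sub_mul_of_hasDerivAt_le_neg {c : ℝ} (hf : ∀ x ≥ a, HasDerivAt f (f' x) x)
    (hneg : ∀ x ≥ a, f' x ≤ -c) {x : ℝ} (hx : a ≤ x) : f x ≤ f a - c * (x - a) := by
  have hmvt := (convex_Ici a).image_sub_le_mul_sub_of_deriv_le
    (fun y hy ↦ (hf y hy).continuousAt.continuousWithinAt)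
    (fun y hy ↦ (hf y (interior_subset hy)).differentiableAt.differentiableWithinAt)
    (fun y hy ↦ (hf y (interior_subset hy)).deriv.trans_le (hneg y (interior_subset hy)))
    a self_mem_Ici x hx hx
  linarith

lemma exists_nonpos_of_hasDerivAt_le_neg {c : ℝ} (hc : 0 < c)
    (hf : ∀ x ≥ a, HasDerivAt f (f' x) x) (hneg : ∀ x ≥ a, 0 ≤ f x → f' x ≤ -c) :
    ∃ x ≥ a, f x ≤ 0 := by
  by_contra! hpos
  have hle : a ≤ a + f a / c := le_add_of_nonneg_right (div_pos (hpos a le_rfl) hc).le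
  have hroot : f (a + f a / c) ≤ 0 := calc
    f (a + f a / c) ≤ f a - c * (a + f a / c - a) :=
      le_sub_mul_of_hasDerivAt_le_neg hf (fun x hx ↦ hneg x hx (hpos x hx).le) hle
    _ = 0 := by rw [add_sub_cancel_left, mul_div_cancel₀ _ hc.ne', sub_self]
  exact (hpos _ hle).not_ge hroot

lemma eventually_nonpos_of_hasDerivAt_le_neg {c : ℝ} (hc : 0 < c)
    (hf : ∀ᶠ x in atTop, HasDerivAt f (f' x) x)
    (hneg : ∀ᶠ x in atTop, 0 ≤ f x → f' x ≤ -c) : ∀ᶠ x in atTop, f x ≤ 0 := by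
  obtain ⟨a, ha⟩ := eventually_atTop.1 (hf.and hneg)
  obtain ⟨b, hab, hb⟩ := exists_nonpos_of_hasDerivAt_le_neg hc (fun x hx ↦ (ha x hx).1)
    (fun x hx ↦ (ha x hx).2)
  filter_upwards [eventually_ge_atTop b] with x hx
  exact nonpos_of_hasDerivAt_neg_of_eq_zero (fun y hy ↦ (ha y (hab.trans hy)).1)
    (fun y hy h0 ↦ ((ha y (hab.trans hy)).2 h0.ge).trans_lt (neg_neg_of_pos hc)) hb hx

end Trapping

section Riccati

open Asymptotics

-- For fixed `s`, the left side decreases in `t ≥ s` once `ε ≤ 1 / 10`, with equality at `t = s`.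
lemma sq_mul_sub_le_four_mul_cube {ε s t : ℝ} (hε : ε ≤ 1 / 10) (hs : 0 ≤ s) (hst : s ≤ t) :
    t ^ 2 * (2 * ε * (s + t) - (t - s)) ≤ 4 * ε * s ^ 3 := by
  have ht : 0 ≤ t := hs.trans hst
  have hquad : 0 ≤ (1 - 2 * ε) * t ^ 2 - 4 * ε * s * t - 4 * ε * s ^ 2 := by
    nlinarith [mul_nonneg hs ht, mul_self_le_mul_self hs hst, mul_nonneg ht (sub_nonneg.2 hst)]
  linear_combination (t - s) * hquad

lemma riccati_rhs_le {ε g d s t : ℝ} (hε₀ : 0 ≤ ε) (hε : ε ≤ 1 / 10) (hs : 1 ≤ s) (hst : s ≤ t)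
    (hg : g ≤ ε / s ^ 2) (hd : -d ≤ ε / s ^ 3) :
    (1 + t ^ 2) * (1 + g - (1 / s + d) * t) ≤ 4 * ε := by
  have hs₀ : 0 < s := by linarith
  have ht : 1 ≤ t := hs.trans hst
  have : 0 ≤ t - s := sub_nonneg.2 hst
  have hfactor : 1 + g - (1 / s + d) * t ≤ (ε * (s + t) - (t - s) * s ^ 2) / s ^ 3 := calc
    1 + g - (1 / s + d) * t = 1 + g + -d * t - t / s := by ring
    _ ≤ 1 + ε / s ^ 2 + ε / s ^ 3 * t - t / s := by gcongr
    _ = (ε * (s + t) - (t - s) * s ^ 2) / s ^ 3 := by field_simp; ring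
  have hnum : (1 + t ^ 2) * (ε * (s + t) - (t - s) * s ^ 2) ≤ 4 * ε * s ^ 3 := calc
    (1 + t ^ 2) * (ε * (s + t) - (t - s) * s ^ 2)
      = (1 + t ^ 2) * (ε * (s + t)) - (1 + t ^ 2) * ((t - s) * s ^ 2) := by ring
    _ ≤ (t ^ 2 + t ^ 2) * (ε * (s + t)) - (0 + t ^ 2) * ((t - s) * 1) := by
      gcongr
      · exact one_le_pow₀ ht
      · exact zero_le_one
      · exact one_le_pow₀ hs
    _ = t ^ 2 * (2 * ε * (s + t) - (t - s)) := by ring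
    _ ≤ 4 * ε * s ^ 3 := sq_mul_sub_le_four_mul_cube hε hs₀.le hst
  calc (1 + t ^ 2) * (1 + g - (1 / s + d) * t)
      ≤ (1 + t ^ 2) * ((ε * (s + t) - (t - s) * s ^ 2) / s ^ 3) := by gcongr
    _ = (1 + t ^ 2) * (ε * (s + t) - (t - s) * s ^ 2) / s ^ 3 := (mul_div_assoc _ _ _).symm
    _ ≤ 4 * ε := (div_le_iff₀ (by positivity)).2 hnum

lemma isLittleO_inv_pow_of_abs_le_div_pow {f : ℝ → ℝ} {C : ℝ} {m n : ℕ} (hmn : m < n)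
    (hf : ∀ᶠ s in atTop, |f s| ≤ C / s ^ n) : f =o[atTop] fun s ↦ (s ^ m)⁻¹ := by
  have hbigO : f =O[atTop] fun s ↦ (s ^ n)⁻¹ := by
    refine IsBigO.of_bound C ?_
    filter_upwards [hf, eventually_ge_atTop 0] with s hfs hs
    rwa [Real.norm_eq_abs, Real.norm_of_nonneg (by positivity), ← div_eq_mul_inv]
  refine hbigO.trans_isLittleO ((isLittleO_pow_pow_atTop_of_lt hmn).inv_rev ?_)
  filter_upwards [eventually_gt_atTop 0] with s hs h0
  exact absurd h0 (by positivity)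

theorem riccati_upper_bound_general {γ δ φ : ℝ → ℝ}
    (hγ : γ =o[atTop] fun s ↦ (s ^ 2)⁻¹) (hδ : δ =o[atTop] fun s ↦ (s ^ 3)⁻¹)
    (hφ : ∀ᶠ s in atTop,
      HasDerivAt φ ((1 + φ s ^ 2) * (1 + γ s - (1 / s + δ s) * φ s)) s) :
    ∀ᶠ s in atTop, φ s ≤ s := by
  have hε : (0 : ℝ) < 1 / 10 := by norm_num
  have hderiv := hφ.mono fun s hs ↦ hs.sub (hasDerivAt_id s)
  have hdecr : ∀ᶠ s in atTop, 0 ≤ φ s - s →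
      (1 + φ s ^ 2) * (1 + γ s - (1 / s + δ s) * φ s) - 1 ≤ -(3 / 5) := by
    filter_upwards [hγ.bound hε, hδ.bound hε, eventually_ge_atTop 1] with s hγs hδs hs hle
    rw [Real.norm_of_nonneg (by positivity : 0 ≤ (s ^ 2)⁻¹), ← div_eq_mul_inv] at hγs
    rw [Real.norm_of_nonneg (by positivity : 0 ≤ (s ^ 3)⁻¹), ← div_eq_mul_inv] at hδs
    have hrhs := riccati_rhs_le hε.le le_rfl hs (sub_nonneg.1 hle) ((le_abs_self _).trans hγs)
      ((neg_le_abs _).trans hδs)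
    linarith
  exact (eventually_nonpos_of_hasDerivAt_le_neg (by norm_num) hderiv hdecr).mono
    fun s ↦ sub_nonpos.1

end Riccati

/-- Upper bound `φ(s) ≤ s + s⁻⁹` for large `s`, for a solution of the perturbed
Riccati-type equation for the slope of the translator's graphical end. -/
theorem riccati_upper_bound
    (s₀ C : ℝ) (hs₀ : 1 < s₀) (hC : 0 < C)
    (γ δ φ φ' : ℝ → ℝ)
    (hγ : Continuous γ) (hδ : Continuous δ)
    (hbound : ∀ s ∈ Ici s₀, |γ s| + |δ s| ≤ C / s ^ 10)
    (hφ : ∀ s ∈ Ici s₀, HasDerivWithinAt φ (φ' s) (Ici s₀) s)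
    (hφ' : ContinuousOn φ' (Ici s₀))
    (heq : ∀ s ∈ Ici s₀,
      φ' s = (1 + φ s ^ 2) * (1 + γ s - (1 / s + δ s) * φ s)) :
    ∃ s₁, s₀ ≤ s₁ ∧ ∀ s ≥ s₁, φ s ≤ s + 1 / s ^ 9 := by
  have hbound' : ∀ᶠ s in atTop, |γ s| + |δ s| ≤ C / s ^ 10 :=
    (eventually_ge_atTop s₀).mono hbound
  have hle : ∀ᶠ s in atTop, φ s ≤ s := riccati_upper_bound_general
    (isLittleO_inv_pow_of_abs_le_div_pow (by norm_num)
      (hbound'.mono fun s ↦ (le_add_of_nonneg_right (abs_nonneg _)).trans))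
    (isLittleO_inv_pow_of_abs_le_div_pow (by norm_num)
      (hbound'.mono fun s ↦ (le_add_of_nonneg_left (abs_nonneg _)).trans))
    ((eventually_gt_atTop s₀).mono fun s hs ↦
      heq s hs.le ▸ (hφ s hs.le).hasDerivAt (Ici_mem_nhds hs))
  obtain ⟨s₁, hs₁, hle₁⟩ := (atTop_basis' s₀).eventually_iff.1 hle
  refine ⟨s₁, hs₁, fun s hs ↦ (hle₁ hs).trans (le_add_of_nonneg_right ?_)⟩
  have hs_pos : 0 < s := by linarith
  positivity
end

section
/- For every ε > 0 there exists s₁ ≥ s₀ such that φ(s) ≥ (1 − ε)·s for all s ≥ s₁. -/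
open Set Filter

open scoped Topology

/-!
Below the line `r * s` with `r < 1`, the second factor of the equation is at least
`1 + γ s - (1 + s * δ s) * r`, which tends to `1 - r > 0`. So there `φ' ≥ c * (1 + φ ^ 2)` for some
`c > 0`, that is, `arctan ∘ φ` has slope at least `c`; since `arctan` is bounded, `φ` must reach the
line. It cannot cross back, because at a contact point `φ' ≥ c * (1 + (r * s) ^ 2)`, which exceeds
the slope `r` of the line once `s` is large.
-/

section Comparison

variable {φ φ' B B' : ℝ → ℝ} {a b c : ℝ}

theorem mul_sub_le_arctan_sub_arctan (hab : a ≤ b) (hφ : ContinuousOn φ (Icc a b))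
    (hφ' : ∀ s ∈ Ico a b, HasDerivWithinAt φ (φ' s) (Ici s) s)
    (hc : ∀ s ∈ Ico a b, c * (1 + φ s ^ 2) ≤ φ' s) :
    c * (b - a) ≤ Real.arctan (φ b) - Real.arctan (φ a) := by
  have hline (s : ℝ) : HasDerivAt (fun t ↦ Real.arctan (φ a) + c * (t - a)) c s := by
    simpa using (((hasDerivAt_id s).sub_const a).const_mul c).const_add (Real.arctan (φ a))
  have hslope : ∀ s ∈ Ico a b, c ≤ 1 / (1 + φ s ^ 2) * φ' s := fun s hs ↦ by
    rw [one_div_mul_eq_div, le_div_iff₀ (by positivity)]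
    exact hc s hs
  have hle : Real.arctan (φ a) + c * (b - a) ≤ Real.arctan (φ b) :=
    image_le_of_deriv_right_le_deriv_boundary (f := fun t ↦ Real.arctan (φ a) + c * (t - a))
      (B := fun t ↦ Real.arctan (φ t)) (by fun_prop) (fun s _ ↦ (hline s).hasDerivWithinAt)
      (by simp) (Real.continuous_arctan.comp_continuousOn hφ) (fun s hs ↦ (hφ' s hs).arctan)
      hslope (right_mem_Icc.2 hab)
  linarith

theorem exists_deriv_lt_mul_one_add_sq (hc : 0 < c) (hφ : ContinuousOn φ (Ici a))
    (hφ' : ∀ s ∈ Ici a, HasDerivWithinAt φ (φ' s) (Ici s) s) :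
    ∃ s ∈ Ici a, φ' s < c * (1 + φ s ^ 2) := by
  by_contra! hge
  have hab : a ≤ a + Real.pi / c := le_add_of_nonneg_right (by positivity)
  have hle := mul_sub_le_arctan_sub_arctan hab (hφ.mono Icc_subset_Ici_self)
    (fun s hs ↦ hφ' s hs.1) (fun s hs ↦ hge s hs.1)
  rw [add_sub_cancel_left, mul_div_cancel₀ _ hc.ne'] at hle
  linarith [Real.arctan_lt_pi_div_two (φ (a + Real.pi / c)), Real.neg_pi_div_two_lt_arctan (φ a)]

theorem eventually_le_of_mul_one_add_sq_le_deriv (hc : 0 < c)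
    (hB : ContinuousOn B (Ici a)) (hB' : ∀ s ∈ Ici a, HasDerivWithinAt B (B' s) (Ici s) s)
    (hφ : ContinuousOn φ (Ici a)) (hφ' : ∀ s ∈ Ici a, HasDerivWithinAt φ (φ' s) (Ici s) s)
    (hB_lt : ∀ s ∈ Ici a, B' s < c * (1 + B s ^ 2))
    (hφ_ge : ∀ s ∈ Ici a, φ s ≤ B s → c * (1 + φ s ^ 2) ≤ φ' s) :
    ∀ᶠ s in atTop, B s ≤ φ s := by
  obtain ⟨s₁, hs₁, hlt⟩ := exists_deriv_lt_mul_one_add_sq hc hφ hφ'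
  have hreach : B s₁ ≤ φ s₁ := le_of_not_ge fun h ↦ hlt.not_ge (hφ_ge s₁ hs₁ h)
  have hsub : Ici s₁ ⊆ Ici a := Ici_subset_Ici.2 hs₁
  have hcontact : ∀ s ∈ Ici s₁, B s = φ s → B' s < φ' s := fun s hs heq ↦
    calc B' s < c * (1 + B s ^ 2) := hB_lt s (hsub hs)
      _ = c * (1 + φ s ^ 2) := by rw [heq]
      _ ≤ φ' s := hφ_ge s (hsub hs) heq.ge
  filter_upwards [eventually_ge_atTop s₁] with s hs
  have hIcc : Icc s₁ s ⊆ Ici a := Icc_subset_Ici_self.trans hsub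
  exact image_le_of_deriv_right_lt_deriv_boundary' (hB.mono hIcc)
    (fun t ht ↦ hB' t (hsub ht.1)) hreach (hφ.mono hIcc) (fun t ht ↦ hφ' t (hsub ht.1))
    (fun t ht ↦ hcontact t ht.1) (right_mem_Icc.2 hs)

end Comparison

theorem eventually_lt_mul_one_add_mul_sq {c : ℝ} (hc : 0 < c) (r : ℝ) :
    ∀ᶠ s : ℝ in atTop, r < c * (1 + (r * s) ^ 2) := by
  filter_upwards [eventually_ge_atTop (1 / c)] with s hs
  have hcs : 1 ≤ (c * s) ^ 2 := one_le_pow₀ ((div_le_iff₀' hc).1 hs)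
  refine lt_of_mul_lt_mul_left ?_ hc.le
  calc c * r < c ^ 2 + r ^ 2 * 1 := by nlinarith [sq_nonneg (c - 2 * r)]
    _ ≤ c ^ 2 + r ^ 2 * (c * s) ^ 2 := by gcongr
    _ = c * (c * (1 + (r * s) ^ 2)) := by ring

theorem eventually_forall_le_mul_le_one_add_sub {γ δ : ℝ → ℝ} {c r : ℝ}
    (hγ : Tendsto γ atTop (𝓝 0)) (hδ : Tendsto (fun s ↦ s * δ s) atTop (𝓝 0))
    (hcr : c < 1 - r) :
    ∀ᶠ s in atTop, ∀ x ≤ r * s, c ≤ 1 + γ s - (1 / s + δ s) * x := by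
  have hlim : Tendsto (fun s ↦ 1 + γ s - (1 + s * δ s) * r) atTop (𝓝 (1 - r)) := by
    simpa using (hγ.const_add 1).sub ((hδ.const_add 1).mul_const r)
  filter_upwards [hlim.eventually_const_lt hcr, hδ.eventually_const_lt neg_one_lt_zero,
    eventually_gt_atTop 0] with s hc hsδ hs x hx
  have hcoeff : 1 / s + δ s = (1 + s * δ s) / s := by field_simp
  have hcoeff_nonneg : 0 ≤ 1 / s + δ s := by
    rw [hcoeff]
    exact div_nonneg (by linarith) hs.le
  calc c ≤ 1 + γ s - (1 + s * δ s) * r := hc.le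
    _ = 1 + γ s - (1 / s + δ s) * (r * s) := by rw [hcoeff]; field_simp
    _ ≤ 1 + γ s - (1 / s + δ s) * x := by gcongr

theorem tendsto_pow_mul_zero_of_abs_le_div_pow {f : ℝ → ℝ} {C : ℝ} {k n : ℕ} (hkn : k < n)
    (hf : ∀ᶠ s in atTop, |f s| ≤ C / s ^ n) :
    Tendsto (fun s ↦ s ^ k * f s) atTop (𝓝 0) := by
  have hlim : Tendsto (fun s : ℝ ↦ C * (s ^ k / s ^ n)) atTop (𝓝 0) := by
    simpa using (tendsto_pow_div_pow_atTop_zero hkn).const_mul C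
  refine squeeze_zero_norm' ?_ hlim
  filter_upwards [hf, eventually_ge_atTop 0] with s hfs hs
  calc ‖s ^ k * f s‖ = s ^ k * |f s| := by
        rw [Real.norm_eq_abs, abs_mul, abs_of_nonneg (pow_nonneg hs k)]
    _ ≤ s ^ k * (C / s ^ n) := by gcongr
    _ = C * (s ^ k / s ^ n) := by ring

theorem riccati_lower_bound_general {s₀ r : ℝ} {γ δ φ φ' : ℝ → ℝ}
    (hγ : Tendsto γ atTop (𝓝 0)) (hδ : Tendsto (fun s ↦ s * δ s) atTop (𝓝 0))
    (hφ : ContinuousOn φ (Ici s₀))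
    (hφ' : ∀ s ∈ Ici s₀, HasDerivWithinAt φ (φ' s) (Ici s) s)
    (hle : ∀ s ∈ Ici s₀, (1 + φ s ^ 2) * (1 + γ s - (1 / s + δ s) * φ s) ≤ φ' s)
    (hr : r < 1) :
    ∀ᶠ s in atTop, r * s ≤ φ s := by
  obtain ⟨c, hc, hcr⟩ := exists_between (sub_pos.2 hr)
  obtain ⟨a, ha, hlarge⟩ := (atTop_basis' s₀).eventually_iff.1
    ((eventually_lt_mul_one_add_mul_sq hc r).and
      (eventually_forall_le_mul_le_one_add_sub hγ hδ hcr))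
  have hsub : Ici a ⊆ Ici s₀ := Ici_subset_Ici.2 ha
  refine eventually_le_of_mul_one_add_sq_le_deriv hc (by fun_prop)
    (fun s _ ↦ (hasDerivAt_const_mul r).hasDerivWithinAt) (hφ.mono hsub)
    (fun s hs ↦ hφ' s (hsub hs)) (fun s hs ↦ (hlarge hs).1) fun s hs hbelow ↦ ?_
  calc c * (1 + φ s ^ 2) = (1 + φ s ^ 2) * c := mul_comm _ _
    _ ≤ (1 + φ s ^ 2) * (1 + γ s - (1 / s + δ s) * φ s) := by
        gcongr
        exact (hlarge hs).2 (φ s) hbelow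
    _ ≤ φ' s := hle s (hsub hs)

/-- Lower bound `φ(s) ≥ (1 − ε)s` for large `s`, for a solution of the perturbed
Riccati-type equation for the slope of the translator's graphical end. -/
theorem riccati_lower_bound
    (s₀ C : ℝ) (hs₀ : 1 < s₀) (hC : 0 < C)
    (γ δ φ φ' : ℝ → ℝ)
    (hγ : Continuous γ) (hδ : Continuous δ)
    (hbound : ∀ s ∈ Ici s₀, |γ s| + |δ s| ≤ C / s ^ 10)
    (hφ : ∀ s ∈ Ici s₀, HasDerivWithinAt φ (φ' s) (Ici s₀) s)
    (hφ' : ContinuousOn φ' (Ici s₀))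
    (heq : ∀ s ∈ Ici s₀,
      φ' s = (1 + φ s ^ 2) * (1 + γ s - (1 / s + δ s) * φ s)) :
    ∀ ε > (0 : ℝ), ∃ s₁, s₀ ≤ s₁ ∧ ∀ s ≥ s₁, (1 - ε) * s ≤ φ s := by
  intro ε hε
  have hγ_le : ∀ᶠ s in atTop, |γ s| ≤ C / s ^ 10 := (eventually_ge_atTop s₀).mono fun s hs ↦
    (le_add_of_nonneg_right (abs_nonneg _)).trans (hbound s hs)
  have hδ_le : ∀ᶠ s in atTop, |δ s| ≤ C / s ^ 10 := (eventually_ge_atTop s₀).mono fun s hs ↦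
    (le_add_of_nonneg_left (abs_nonneg _)).trans (hbound s hs)
  have hlower : ∀ᶠ s in atTop, (1 - ε) * s ≤ φ s := riccati_lower_bound_general
    (by simpa using tendsto_pow_mul_zero_of_abs_le_div_pow (k := 0) (by norm_num) hγ_le)
    (by simpa using tendsto_pow_mul_zero_of_abs_le_div_pow (k := 1) (by norm_num) hδ_le)
    (fun s hs ↦ (hφ s hs).continuousWithinAt)
    (fun s hs ↦ (hφ s hs).mono (Ici_subset_Ici.2 hs)) (fun s hs ↦ (heq s hs).ge)
    (sub_lt_self 1 hε)
  exact (atTop_basis' s₀).eventually_iff.1 hlower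
end

section
/- φ(s) − s → 0 as s → ∞. -/
open Set Filter

/-!
Write the equation as `φ' = (1 + φ²) κ (ψ - φ)` with `κ = 1 / s + δ` and `ψ = (1 + γ) / κ`: the
solution is pulled towards a target `ψ` with `ψ - s → 0`, at a rate `κ` comparable to `1 / s`.
Any line `s + ε` is eventually an upper barrier, since above it `φ` decreases. From below the pull
`κ (ψ - φ)` alone is too weak near the target, but the factor `1 + φ²` bootstraps: far below the
target `φ' ≥ const > 0`, so `φ → ∞`; hence `φ' ≥ 1` whenever `φ ≤ s / 2`, so `φ ≥ s / 2`
eventually; hence `φ'` is at least of order `ε s` whenever `φ ≤ s - ε`, so `φ ≥ s - ε` eventually.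
-/

section Comparison

variable {f g f' g' : ℝ → ℝ} {c : ℝ}

lemma tendsto_atTop_of_eventually_le_deriv (hc : 0 < c)
    (hf : ∀ᶠ s in atTop, HasDerivAt f (f' s) s) (hf' : ∀ᶠ s in atTop, c ≤ f' s) :
    Tendsto f atTop atTop := by
  obtain ⟨S, hS⟩ := eventually_atTop.1 (hf.and hf')
  have linear_le : ∀ s ≥ S, c * (s - S) + f S ≤ f s := fun s hs => by
    have growth : c * (s - S) ≤ f s - f S :=
      (convex_Ici S).mul_sub_le_image_sub_of_le_deriv
        (fun x hx => (hS x hx).1.continuousAt.continuousWithinAt)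
        (fun x hx => (hS x (interior_subset hx)).1.differentiableAt.differentiableWithinAt)
        (fun x hx => (hS x (interior_subset hx)).1.deriv ▸ (hS x (interior_subset hx)).2)
        S self_mem_Ici s hs hs
    linarith
  refine tendsto_atTop_mono' atTop (eventually_atTop.2 ⟨S, linear_le⟩) ?_
  exact tendsto_atTop_add_const_right _ _
    ((tendsto_atTop_add_const_right atTop (-S) tendsto_id).const_mul_atTop hc)

lemma eventually_le_of_imp_deriv_add_le (hc : 0 < c)
    (hf : ∀ᶠ s in atTop, HasDerivAt f (f' s) s) (hg : ∀ᶠ s in atTop, HasDerivAt g (g' s) s)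
    (hfg : ∀ᶠ s in atTop, g s ≤ f s → f' s + c ≤ g' s) :
    ∀ᶠ s in atTop, f s ≤ g s := by
  have crossing : ∃ᶠ s in atTop, f s ≤ g s := fun above => by
    have gap_tendsto : Tendsto (g - f) atTop atTop := by
      refine tendsto_atTop_of_eventually_le_deriv (f' := g' - f') hc ?_ ?_
      · filter_upwards [hf, hg] with s hfs hgs using hgs.sub hfs
      · filter_upwards [above, hfg] with s hs hfgs
        exact le_sub_iff_add_le'.2 (hfgs (not_le.1 hs).le)
    obtain ⟨s, hs, gap_nonneg⟩ := (above.and (gap_tendsto.eventually_ge_atTop 0)).exists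
    exact hs (sub_nonneg.1 gap_nonneg)
  obtain ⟨S, hS⟩ := eventually_atTop.1 (hf.and (hg.and hfg))
  obtain ⟨T, hT, hfgT⟩ := frequently_atTop.1 crossing S
  filter_upwards [eventually_ge_atTop T] with U hU
  refine image_le_of_deriv_right_lt_deriv_boundary' (a := T) (b := U) (f' := f') (B' := g')
    (fun x hx => (hS x (hT.trans hx.1)).1.continuousAt.continuousWithinAt)
    (fun x hx => (hS x (hT.trans hx.1)).1.hasDerivWithinAt) hfgT
    (fun x hx => (hS x (hT.trans hx.1)).2.1.continuousAt.continuousWithinAt)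
    (fun x hx => (hS x (hT.trans hx.1)).2.1.hasDerivWithinAt)
    (fun x hx contact => ?_) (right_mem_Icc.2 hU)
  linarith [(hS x (hT.trans hx.1)).2.2 contact.ge]

end Comparison

section Rate

variable {κ ψ : ℝ → ℝ} {c θ : ℝ}

lemma eventually_nonneg_of_le_id_mul (hc : 0 < c) (hκ : ∀ᶠ s in atTop, c ≤ s * κ s) :
    ∀ᶠ s in atTop, 0 ≤ κ s := by
  filter_upwards [hκ, eventually_gt_atTop 0] with s hκs hs
  exact nonneg_of_mul_nonneg_right (hc.le.trans hκs) hs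

/-- Below a line of slope `θ < 1` the distance to `ψ` is of order `s`, which compensates the decay
of `κ`. -/
lemma eventually_forall_le_mul_sub_of_le_mul (hc : 0 < c) (hκ : ∀ᶠ s in atTop, c ≤ s * κ s)
    (hψ : Tendsto (fun s => ψ s - s) atTop (nhds 0)) (hθ : θ < 1) :
    ∀ᶠ s in atTop, ∀ x ≤ θ * s, c * ((1 - θ) / 2) ≤ κ s * (ψ s - x) := by
  have hθ' : 0 < (1 - θ) / 2 := by linarith
  filter_upwards [hκ, eventually_nonneg_of_le_id_mul hc hκ, hψ.eventually_const_le neg_one_lt_zero,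
    (tendsto_id.const_mul_atTop hθ').eventually_ge_atTop 1] with s hκs κ_nonneg hψs hsθ x below
  have distance : s * ((1 - θ) / 2) ≤ ψ s - x := by
    simp only [id] at hsθ
    linarith
  calc c * ((1 - θ) / 2) ≤ s * κ s * ((1 - θ) / 2) := by gcongr
    _ = κ s * (s * ((1 - θ) / 2)) := by ring
    _ ≤ κ s * (ψ s - x) := by gcongr

end Rate

/-- `φ` solves, for all large `s`, the Riccati-type equation `φ' = (1 + φ²) κ (ψ - φ)`, in which
`φ` is attracted to the target `ψ` at the rate `(1 + φ²) κ`. -/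
def IsRiccatiSolution (κ ψ φ : ℝ → ℝ) : Prop :=
  ∀ᶠ s in atTop, HasDerivAt φ ((1 + φ s ^ 2) * (κ s * (ψ s - φ s))) s

namespace IsRiccatiSolution

variable {κ ψ φ : ℝ → ℝ} {c θ ε : ℝ}

lemma eventually_le_of_target_le {b b' : ℝ → ℝ} (h : IsRiccatiSolution κ ψ φ)
    (hκ : ∀ᶠ s in atTop, 0 ≤ κ s) (hc : 0 < c) (hb : ∀ᶠ s in atTop, HasDerivAt b (b' s) s)
    (hb' : ∀ᶠ s in atTop, c ≤ b' s) (hψ : ∀ᶠ s in atTop, ψ s ≤ b s) :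
    ∀ᶠ s in atTop, φ s ≤ b s := by
  refine eventually_le_of_imp_deriv_add_le hc h hb ?_
  filter_upwards [hκ, hb', hψ] with s hκs slope hψs above
  have speed_nonpos : (1 + φ s ^ 2) * (κ s * (ψ s - φ s)) ≤ 0 :=
    mul_nonpos_of_nonneg_of_nonpos (by positivity)
      (mul_nonpos_of_nonneg_of_nonpos hκs (by linarith))
  linarith

lemma tendsto_atTop (h : IsRiccatiSolution κ ψ φ) (hc : 0 < c)
    (hκ : ∀ᶠ s in atTop, c ≤ s * κ s) (hψ : Tendsto (fun s => ψ s - s) atTop (nhds 0)) :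
    Tendsto φ atTop atTop := by
  refine Filter.tendsto_atTop.2 fun M => ?_
  refine eventually_le_of_imp_deriv_add_le (c := c / 4) (by positivity)
    (.of_forall fun s => hasDerivAt_const s M) h ?_
  filter_upwards [eventually_forall_le_mul_sub_of_le_mul hc hκ hψ one_half_lt_one,
    eventually_ge_atTop (2 * M)] with s pull hs below
  have pull_s : c / 4 ≤ κ s * (ψ s - φ s) := by linarith [pull (φ s) (by linarith)]
  calc 0 + c / 4 ≤ κ s * (ψ s - φ s) := by rwa [zero_add]
    _ ≤ (1 + φ s ^ 2) * (κ s * (ψ s - φ s)) :=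
      le_mul_of_one_le_left (by linarith) (le_add_of_nonneg_right (sq_nonneg _))

lemma eventually_mul_le (h : IsRiccatiSolution κ ψ φ) (hc : 0 < c)
    (hκ : ∀ᶠ s in atTop, c ≤ s * κ s) (hψ : Tendsto (fun s => ψ s - s) atTop (nhds 0))
    (hθ : θ < 1) : ∀ᶠ s in atTop, θ * s ≤ φ s := by
  have speed_tendsto : Tendsto (fun s => (1 + φ s ^ 2) * (c * ((1 - θ) / 2))) atTop atTop := by
    refine Tendsto.atTop_mul_const (by nlinarith) (tendsto_atTop_add_const_left _ _ ?_)
    exact (tendsto_pow_atTop two_ne_zero).comp (h.tendsto_atTop hc hκ hψ)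
  refine eventually_le_of_imp_deriv_add_le one_pos
    (.of_forall fun s => (hasDerivAt_id s).const_mul θ) h ?_
  filter_upwards [eventually_forall_le_mul_sub_of_le_mul hc hκ hψ hθ,
    speed_tendsto.eventually_ge_atTop (θ * 1 + 1)] with s pull large below
  exact large.trans (mul_le_mul_of_nonneg_left (pull (φ s) below) (by positivity))

lemma eventually_sub_le (h : IsRiccatiSolution κ ψ φ) (hc : 0 < c)
    (hκ : ∀ᶠ s in atTop, c ≤ s * κ s) (hψ : Tendsto (fun s => ψ s - s) atTop (nhds 0))
    (hε : 0 < ε) : ∀ᶠ s in atTop, s - ε ≤ φ s := by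
  refine eventually_le_of_imp_deriv_add_le one_pos
    (.of_forall fun s => (hasDerivAt_id s).sub_const ε) h ?_
  filter_upwards [hκ, eventually_nonneg_of_le_id_mul hc hκ,
    hψ.eventually_const_le (show -(ε / 2) < 0 by linarith),
    h.eventually_mul_le hc hκ hψ one_half_lt_one, eventually_gt_atTop 0,
    (tendsto_id.const_mul_atTop (show 0 < c * ε / 8 by positivity)).eventually_ge_atTop 2]
    with s hκs κ_nonneg hψs half_le hs large below
  have distance : ε / 2 ≤ ψ s - φ s := by linarith
  have sq_le : (1 / 2 * s) ^ 2 ≤ 1 + φ s ^ 2 :=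
    (pow_le_pow_left₀ (by positivity) half_le 2).trans (by linarith)
  calc (1 : ℝ) + 1 ≤ c * ε / 8 * s := by simpa only [one_add_one_eq_two, id] using large
    _ = s * c * (ε / 8) := by ring
    _ ≤ s * (s * κ s) * (ε / 8) := by gcongr
    _ = (1 / 2 * s) ^ 2 * (κ s * (ε / 2)) := by ring
    _ ≤ (1 + φ s ^ 2) * (κ s * (ψ s - φ s)) := by gcongr

theorem tendsto_sub_id (h : IsRiccatiSolution κ ψ φ) (hc : 0 < c)
    (hκ : ∀ᶠ s in atTop, c ≤ s * κ s) (hψ : Tendsto (fun s => ψ s - s) atTop (nhds 0)) :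
    Tendsto (fun s => φ s - s) atTop (nhds 0) := by
  refine Metric.nhds_basis_closedBall.tendsto_right_iff.2 fun ε hε => ?_
  have target_le : ∀ᶠ s in atTop, ψ s ≤ s + ε := by
    filter_upwards [hψ.eventually_le_const hε] with s hs using by linarith
  have upper : ∀ᶠ s in atTop, φ s ≤ s + ε :=
    h.eventually_le_of_target_le (eventually_nonneg_of_le_id_mul hc hκ) one_pos
      (.of_forall fun s => (hasDerivAt_id s).add_const ε) (.of_forall fun _ => le_rfl) target_le
  filter_upwards [upper, h.eventually_sub_le hc hκ hψ hε] with s upper_s lower_s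
  rw [mem_closedBall_zero_iff, Real.norm_eq_abs, abs_le]
  constructor <;> linarith

end IsRiccatiSolution

section Perturbation

variable {γ δ : ℝ → ℝ}

lemma tendsto_mul_one_div_add (hδ : Tendsto (fun s => s ^ 2 * δ s) atTop (nhds 0)) :
    Tendsto (fun s => s * (1 / s + δ s)) atTop (nhds 1) := by
  have lim : Tendsto (fun s => 1 + s⁻¹ * (s ^ 2 * δ s)) atTop (nhds 1) := by
    simpa using (tendsto_inv_atTop_zero.mul hδ).const_add 1
  refine lim.congr' ?_
  filter_upwards [eventually_ne_atTop 0] with s hs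
  field_simp

lemma tendsto_one_add_div_one_div_add_sub_id
    (hγ : Tendsto (fun s => s * γ s) atTop (nhds 0))
    (hδ : Tendsto (fun s => s ^ 2 * δ s) atTop (nhds 0)) :
    Tendsto (fun s => (1 + γ s) / (1 / s + δ s) - s) atTop (nhds 0) := by
  have rate_tendsto := tendsto_mul_one_div_add hδ
  have lim : Tendsto (fun s => (s * γ s - s ^ 2 * δ s) / (s * (1 / s + δ s))) atTop (nhds 0) := by
    simpa only [sub_zero, zero_div, Pi.div_def] using (hγ.sub hδ).div rate_tendsto one_ne_zero
  refine lim.congr' ?_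
  filter_upwards [eventually_ne_atTop 0, rate_tendsto.eventually_ne one_ne_zero] with s hs rate_ne
  have κ_ne : 1 / s + δ s ≠ 0 := right_ne_zero_of_mul rate_ne
  rw [div_sub' κ_ne, div_eq_div_iff rate_ne κ_ne]
  field_simp
  ring

lemma tendsto_pow_mul_of_abs_le_div_pow {f : ℝ → ℝ} {C : ℝ} {k n : ℕ} (hkn : k < n)
    (hf : ∀ᶠ s in atTop, |f s| ≤ C / s ^ n) :
    Tendsto (fun s => s ^ k * f s) atTop (nhds 0) := by
  have lim : Tendsto (fun s : ℝ => C * (s ^ k / s ^ n)) atTop (nhds 0) := by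
    simpa using (tendsto_pow_div_pow_atTop_zero hkn).const_mul C
  refine squeeze_zero_norm' ?_ lim
  filter_upwards [hf, eventually_ge_atTop 0] with s hfs hs
  calc ‖s ^ k * f s‖ = s ^ k * |f s| := by
        rw [norm_mul, Real.norm_eq_abs, Real.norm_eq_abs, abs_of_nonneg (pow_nonneg hs k)]
    _ ≤ s ^ k * (C / s ^ n) := by gcongr
    _ = C * (s ^ k / s ^ n) := by ring

end Perturbation

theorem riccati_sub_linear_limit_general {γ δ φ : ℝ → ℝ}
    (hγ : Tendsto (fun s => s * γ s) atTop (nhds 0))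
    (hδ : Tendsto (fun s => s ^ 2 * δ s) atTop (nhds 0))
    (hφ : ∀ᶠ s in atTop,
      HasDerivAt φ ((1 + φ s ^ 2) * (1 + γ s - (1 / s + δ s) * φ s)) s) :
    Tendsto (fun s => φ s - s) atTop (nhds 0) := by
  have rate_tendsto := tendsto_mul_one_div_add hδ
  have solution : IsRiccatiSolution (fun s => 1 / s + δ s)
      (fun s => (1 + γ s) / (1 / s + δ s)) φ := by
    filter_upwards [hφ, rate_tendsto.eventually_ne one_ne_zero] with s hφs rate_ne
    rwa [mul_sub, mul_div_cancel₀ _ (right_ne_zero_of_mul rate_ne)]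
  exact solution.tendsto_sub_id one_half_pos (rate_tendsto.eventually_const_le one_half_lt_one)
    (tendsto_one_add_div_one_div_add_sub_id hγ hδ)

/-- `φ(s) − s → 0` as `s → ∞`, for a solution of the perturbed Riccati-type
equation for the slope of the translator's graphical end. -/
theorem riccati_sub_linear_limit
    (s₀ C : ℝ) (hs₀ : 1 < s₀) (hC : 0 < C)
    (γ δ φ φ' : ℝ → ℝ)
    (hγ : Continuous γ) (hδ : Continuous δ)
    (hbound : ∀ s ∈ Ici s₀, |γ s| + |δ s| ≤ C / s ^ 10)
    (hφ : ∀ s ∈ Ici s₀, HasDerivWithinAt φ (φ' s) (Ici s₀) s)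
    (hφ' : ContinuousOn φ' (Ici s₀))
    (heq : ∀ s ∈ Ici s₀,
      φ' s = (1 + φ s ^ 2) * (1 + γ s - (1 / s + δ s) * φ s)) :
    Tendsto (fun s => φ s - s) atTop (nhds 0) := by
  have bound : ∀ᶠ s in atTop, |γ s| + |δ s| ≤ C / s ^ 10 := eventually_atTop.2 ⟨s₀, hbound⟩
  have γ_le : ∀ᶠ s in atTop, |γ s| ≤ C / s ^ 10 :=
    bound.mono fun s => (le_add_of_nonneg_right (abs_nonneg (δ s))).trans
  have δ_le : ∀ᶠ s in atTop, |δ s| ≤ C / s ^ 10 :=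
    bound.mono fun s => (le_add_of_nonneg_left (abs_nonneg (γ s))).trans
  refine riccati_sub_linear_limit_general
    (by simpa only [pow_one] using
      tendsto_pow_mul_of_abs_le_div_pow (k := 1) (by norm_num) γ_le)
    (tendsto_pow_mul_of_abs_le_div_pow (by norm_num) δ_le) ?_
  filter_upwards [eventually_gt_atTop s₀] with s hs
  exact heq s hs.le ▸ (hφ s hs.le).hasDerivAt (Ici_mem_nhds hs)
end

section
/- s·(φ(s) − s) → −1 as s → ∞. -/
open Set Filter

open Asymptotics
open scoped Topology

/-!
The second factor of the right-hand side is affine and eventually decreasing in `φ`, and at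
`φ = s + k / s` it equals `(-k + o(1)) / s ^ 2`. Hence, as long as `φ ~ s`, a solution above the
curve `s + k / s` with `-1 < k < 0` has derivative at most `-k + o(1) < 1`, one below it with
`k < -1` has derivative at least `-k + o(1) > 1`, while the curve itself has slope `1 + o(1)`: the
solution is forced across the curve and cannot come back. The condition `φ ~ s` is reached by the
same argument with the cruder barriers `s + 1 / s` from above and `s / 3`, `s - 10 / s` from below.
-/

section Comparison

variable {f g f' g' a b : ℝ → ℝ} {c α β : ℝ}

lemma frequently_nonpos_of_deriv_le_neg (hc : 0 < c)
    (hf : ∀ᶠ s in atTop, HasDerivAt f (f' s) s)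
    (hf' : ∀ᶠ s in atTop, 0 ≤ f s → f' s ≤ -c) :
    ∃ᶠ s in atTop, f s ≤ 0 := by
  intro hpos
  obtain ⟨S, hS⟩ := eventually_atTop.1 (hf.and (hf'.and hpos))
  have hlinear : ∀ s ≥ S, f s ≤ f S - c * (s - S) := fun s hs ↦ by
    have hmvt := (convex_Ici S).image_sub_le_mul_sub_of_deriv_le (C := -c)
      (fun x hx ↦ (hS x hx).1.continuousAt.continuousWithinAt)
      (fun x hx ↦ (hS x (interior_subset hx)).1.differentiableAt.differentiableWithinAt)
      (fun x hx ↦ by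
        obtain ⟨hderiv, hle, hx_pos⟩ := hS x (interior_subset hx)
        exact hderiv.deriv.trans_le (hle (not_le.1 hx_pos).le))
      S self_mem_Ici s hs hs
    linarith
  have hfS : 0 < f S := not_le.1 (hS S le_rfl).2.2
  have hle : S ≤ S + f S / c := le_add_of_nonneg_right (by positivity)
  refine (hS _ hle).2.2 ((hlinear _ hle).trans_eq ?_)
  field_simp
  ring

lemma eventually_nonpos_of_deriv_le_neg (hc : 0 < c)
    (hf : ∀ᶠ s in atTop, HasDerivAt f (f' s) s)
    (hf' : ∀ᶠ s in atTop, 0 ≤ f s → f' s ≤ -c) :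
    ∀ᶠ s in atTop, f s ≤ 0 := by
  obtain ⟨S, hS⟩ := eventually_atTop.1 (hf.and hf')
  obtain ⟨T, hST, hT⟩ := frequently_atTop.1 (frequently_nonpos_of_deriv_le_neg hc hf hf') S
  filter_upwards [eventually_ge_atTop T] with s hs
  refine image_le_of_deriv_right_lt_deriv_boundary (B := fun _ ↦ 0) (B' := fun _ ↦ 0)
    (fun x hx ↦ (hS x (hST.trans hx.1)).1.continuousAt.continuousWithinAt)
    (fun x hx ↦ (hS x (hST.trans hx.1)).1.hasDerivWithinAt) hT
    (fun x ↦ hasDerivAt_const x 0) (fun x hx hx0 ↦ ?_) (right_mem_Icc.2 hs)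
  linarith [(hS x (hST.trans hx.1)).2 hx0.ge]

lemma eventually_le_of_tendsto_deriv_lt
    (hf : ∀ᶠ s in atTop, HasDerivAt f (f' s) s) (hg : ∀ᶠ s in atTop, HasDerivAt g (g' s) s)
    (hderiv : ∀ᶠ s in atTop, g s ≤ f s → f' s ≤ a s ∧ b s ≤ g' s)
    (ha : Tendsto a atTop (𝓝 α)) (hb : Tendsto b atTop (𝓝 β)) (hαβ : α < β) :
    ∀ᶠ s in atTop, f s ≤ g s := by
  obtain ⟨c, hc, hcβ⟩ := exists_between (sub_pos.2 hαβ)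
  have hgap : ∀ᶠ s in atTop, c < b s - a s := (hb.sub ha).eventually_const_lt hcβ
  have hsub : ∀ᶠ s in atTop, (f - g) s ≤ 0 := by
    refine eventually_nonpos_of_deriv_le_neg (f' := f' - g') hc ?_ ?_
    · filter_upwards [hf, hg] with s hfs hgs using hfs.sub hgs
    · filter_upwards [hderiv, hgap] with s hs hgap_s hle
      obtain ⟨hfa, hbg⟩ := hs (sub_nonneg.1 hle)
      simp only [Pi.sub_apply]
      linarith
  filter_upwards [hsub] with s hs using sub_nonpos.1 hs

end Comparison

section Decay

variable {f : ℝ → ℝ} {C : ℝ} {m n : ℕ}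

lemma tendsto_pow_mul_zero_of_isLittleO (hf : f =o[atTop] fun s ↦ (s ^ n)⁻¹) (hmn : m ≤ n) :
    Tendsto (fun s ↦ s ^ m * f s) atTop (𝓝 0) := by
  have hpow : (fun s : ℝ ↦ s ^ m) =O[atTop] fun s ↦ s ^ n :=
    (isBigO_pow_pow_cobounded_of_le hmn).mono IsOrderBornology.atTop_le_cobounded
  refine (isLittleO_one_iff ℝ).1 ((hpow.mul_isLittleO hf).congr' EventuallyEq.rfl ?_)
  filter_upwards [eventually_ne_atTop 0] with s hs using mul_inv_cancel₀ (pow_ne_zero n hs)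

lemma isLittleO_inv_pow_of_abs_le (hf : ∀ᶠ s in atTop, |f s| ≤ C / s ^ n) (hmn : m < n) :
    f =o[atTop] fun s ↦ (s ^ m)⁻¹ := by
  have hbigO : f =O[atTop] fun s ↦ (s ^ n)⁻¹ := by
    refine IsBigO.of_bound |C| ?_
    filter_upwards [hf] with s hs
    rw [Real.norm_eq_abs, Real.norm_eq_abs, ← abs_mul, ← div_eq_mul_inv]
    exact hs.trans (le_abs_self _)
  have hpow : (fun s : ℝ ↦ (s ^ n)⁻¹) =o[atTop] fun s ↦ (s ^ m)⁻¹ :=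
    (isLittleO_pow_pow_atTop_of_lt hmn).inv_rev <| by
      filter_upwards [eventually_ne_atTop 0] with s hs h0 using absurd h0 (pow_ne_zero m hs)
  exact hbigO.trans_isLittleO hpow

end Decay

section BarrierCurve

lemma eventually_hasDerivAt_add_div (k : ℝ) :
    ∀ᶠ s in atTop, HasDerivAt (fun s ↦ s + k / s) (1 - k / s ^ 2) s := by
  filter_upwards [eventually_ne_atTop 0] with s hs
  have hderiv := (hasDerivAt_id' s).add ((hasDerivAt_const s k).div (hasDerivAt_id' s) hs)
  exact hderiv.congr_deriv (by ring)

lemma tendsto_one_sub_div_sq (k : ℝ) :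
    Tendsto (fun s : ℝ ↦ 1 - k / s ^ 2) atTop (𝓝 1) := by
  simpa using (tendsto_const_nhds (x := k)).div_atTop (tendsto_pow_atTop two_ne_zero)
    |>.const_sub 1

lemma tendsto_add_div_div_self (k : ℝ) :
    Tendsto (fun s : ℝ ↦ (s + k / s) / s) atTop (𝓝 1) := by
  have hlim : Tendsto (fun s : ℝ ↦ 1 + k / s ^ 2) atTop (𝓝 1) := by
    simpa [neg_div] using tendsto_one_sub_div_sq (-k)
  refine hlim.congr' ?_
  filter_upwards [eventually_ne_atTop 0] with s hs
  field_simp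

end BarrierCurve

/-- The second factor of the right-hand side of the Riccati-type equation
`φ' = (1 + φ ^ 2) * riccatiFactor γ δ s φ`, as a function of the time `s` and the value `p = φ s`;
its sign decides whether the solution increases. -/
noncomputable def riccatiFactor (γ δ : ℝ → ℝ) (s p : ℝ) : ℝ :=
  1 + γ s - (1 / s + δ s) * p

section Riccati

variable {γ δ φ : ℝ → ℝ}
variable (hγ : γ =o[atTop] fun s ↦ (s ^ 2)⁻¹) (hδ : δ =o[atTop] fun s ↦ (s ^ 3)⁻¹)
  (hφ : ∀ᶠ s in atTop, HasDerivAt φ ((1 + φ s ^ 2) * riccatiFactor γ δ s (φ s)) s)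

include hδ

lemma eventually_antitone_riccatiFactor :
    ∀ᶠ s in atTop, Antitone (riccatiFactor γ δ s) := by
  have hsδ : Tendsto (fun s ↦ s ^ 1 * δ s) atTop (𝓝 0) :=
    tendsto_pow_mul_zero_of_isLittleO hδ (by norm_num)
  filter_upwards [eventually_gt_atTop 0, hsδ.eventually_const_lt neg_one_lt_zero]
    with s hs hδs p q hpq
  have hcoeff : 0 ≤ 1 / s + δ s := by
    have hfactor : 1 / s + δ s = (1 + s ^ 1 * δ s) / s := by field_simp
    rw [hfactor]
    exact div_nonneg (by linarith) hs.le
  exact sub_le_sub_left (mul_le_mul_of_nonneg_left hpq hcoeff) _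

section Barrier

variable {a u u' : ℝ → ℝ} {α β : ℝ}

include hφ

lemma eventually_solution_le_barrier
    (hu : ∀ᶠ s in atTop, HasDerivAt u (u' s) s) (hu' : Tendsto u' atTop (𝓝 β))
    (hfield : ∀ᶠ s in atTop, u s ≤ φ s → (1 + φ s ^ 2) * riccatiFactor γ δ s (u s) ≤ a s)
    (ha : Tendsto a atTop (𝓝 α)) (hαβ : α < β) :
    ∀ᶠ s in atTop, φ s ≤ u s := by
  refine eventually_le_of_tendsto_deriv_lt hφ hu ?_ ha hu' hαβ
  filter_upwards [hfield, eventually_antitone_riccatiFactor hδ] with s hs hanti hle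
  exact ⟨(mul_le_mul_of_nonneg_left (hanti hle) (by positivity)).trans (hs hle), le_rfl⟩

lemma eventually_barrier_le_solution
    (hu : ∀ᶠ s in atTop, HasDerivAt u (u' s) s) (hu' : Tendsto u' atTop (𝓝 β))
    (hfield : ∀ᶠ s in atTop, φ s ≤ u s → a s ≤ (1 + φ s ^ 2) * riccatiFactor γ δ s (u s))
    (ha : Tendsto a atTop (𝓝 α)) (hβα : β < α) :
    ∀ᶠ s in atTop, u s ≤ φ s := by
  refine eventually_le_of_tendsto_deriv_lt hu hφ ?_ hu' ha hβα
  filter_upwards [hfield, eventually_antitone_riccatiFactor hδ] with s hs hanti hle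
  exact ⟨le_rfl, (hs hle).trans (mul_le_mul_of_nonneg_left (hanti hle) (by positivity))⟩

end Barrier

include hγ

lemma tendsto_riccatiFactor_mul (r : ℝ) :
    Tendsto (fun s ↦ riccatiFactor γ δ s (r * s)) atTop (𝓝 (1 - r)) := by
  have hγ₀ := tendsto_pow_mul_zero_of_isLittleO hγ (Nat.zero_le 2)
  have hδ₁ := tendsto_pow_mul_zero_of_isLittleO hδ (show 1 ≤ 3 by norm_num)
  have hlim := (hγ₀.const_add (1 - r)).sub (hδ₁.const_mul r)
  rw [mul_zero, add_zero, sub_zero] at hlim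
  refine hlim.congr' ?_
  filter_upwards [eventually_ne_atTop 0] with s hs
  rw [riccatiFactor]
  field_simp
  ring

lemma tendsto_sq_mul_riccatiFactor (k : ℝ) :
    Tendsto (fun s ↦ s ^ 2 * riccatiFactor γ δ s (s + k / s)) atTop (𝓝 (-k)) := by
  have hγ₂ := tendsto_pow_mul_zero_of_isLittleO hγ le_rfl
  have hδ₁ := tendsto_pow_mul_zero_of_isLittleO hδ (show 1 ≤ 3 by norm_num)
  have hδ₃ := tendsto_pow_mul_zero_of_isLittleO hδ le_rfl
  have hlim := ((hγ₂.const_add (-k)).sub hδ₃).sub (hδ₁.const_mul k)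
  rw [mul_zero, add_zero, sub_zero, sub_zero] at hlim
  refine hlim.congr' ?_
  filter_upwards [eventually_ne_atTop 0] with s hs
  rw [riccatiFactor]
  field_simp
  ring

lemma eventually_riccatiFactor_pos {k : ℝ} (hk : k < 0) :
    ∀ᶠ s in atTop, 0 < riccatiFactor γ δ s (s + k / s) := by
  filter_upwards [(tendsto_sq_mul_riccatiFactor hγ hδ k).eventually_const_lt (neg_pos.2 hk)]
    with s hs using pos_of_mul_pos_right hs (sq_nonneg s)

lemma eventually_riccatiFactor_neg {k : ℝ} (hk : 0 < k) :
    ∀ᶠ s in atTop, riccatiFactor γ δ s (s + k / s) < 0 := by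
  filter_upwards [(tendsto_sq_mul_riccatiFactor hγ hδ k).eventually_lt_const (neg_lt_zero.2 hk)]
    with s hs using neg_of_mul_neg_right hs (sq_nonneg s)

lemma tendsto_one_add_sq_mul_riccatiFactor (k : ℝ) {q : ℝ → ℝ} {r : ℝ}
    (hq : Tendsto (fun s ↦ q s / s) atTop (𝓝 r)) :
    Tendsto (fun s ↦ (1 + q s ^ 2) * riccatiFactor γ δ s (s + k / s)) atTop
      (𝓝 (r ^ 2 * -k)) := by
  have hinv : Tendsto (fun s : ℝ ↦ s⁻¹ ^ 2) atTop (𝓝 0) := by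
    simpa using (tendsto_inv_atTop_zero (𝕜 := ℝ)).pow 2
  have hlim := (hinv.add (hq.pow 2)).mul (tendsto_sq_mul_riccatiFactor hγ hδ k)
  rw [zero_add] at hlim
  refine hlim.congr' ?_
  filter_upwards [eventually_ne_atTop 0] with s hs
  field_simp

include hφ

lemma eventually_mul_le_solution {r : ℝ} (hr : r < 1 / 2) :
    ∀ᶠ s in atTop, r * s ≤ φ s := by
  have hlim := tendsto_riccatiFactor_mul hγ hδ r
  refine eventually_barrier_le_solution hδ hφ
    (.of_forall fun s ↦ by simpa using (hasDerivAt_id s).const_mul r) tendsto_const_nhds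
    ?_ hlim (by linarith)
  filter_upwards [hlim.eventually_const_lt (show 0 < 1 - r by linarith)] with s hs _
  exact le_mul_of_one_le_left hs.le (le_add_of_nonneg_right (sq_nonneg _))

lemma eventually_add_div_le_solution_of_le {q : ℝ → ℝ} {k r : ℝ}
    (hqφ : ∀ᶠ s in atTop, q s ≤ φ s) (hq : Tendsto (fun s ↦ q s / s) atTop (𝓝 r)) (hr : 0 < r)
    (hrk : 1 < r ^ 2 * -k) :
    ∀ᶠ s in atTop, s + k / s ≤ φ s := by
  have hk : k < 0 := neg_pos.1 (pos_of_mul_pos_right (one_pos.trans hrk) (sq_nonneg r))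
  refine eventually_barrier_le_solution hδ hφ (eventually_hasDerivAt_add_div k)
    (tendsto_one_sub_div_sq k) ?_ (tendsto_one_add_sq_mul_riccatiFactor hγ hδ k hq) hrk
  filter_upwards [hqφ, eventually_riccatiFactor_pos hγ hδ hk, hq.eventually_const_lt hr,
    eventually_gt_atTop 0] with s hqs hpos hqdiv hs _
  have hq_nonneg : 0 ≤ q s := ((div_pos_iff_of_pos_right hs).1 hqdiv).le
  gcongr

lemma eventually_solution_le_add_div_of_pos {k : ℝ} (hk : 0 < k) :
    ∀ᶠ s in atTop, φ s ≤ s + k / s := by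
  refine eventually_solution_le_barrier hδ hφ (eventually_hasDerivAt_add_div k)
    (tendsto_one_sub_div_sq k) ?_ tendsto_const_nhds zero_lt_one
  filter_upwards [eventually_riccatiFactor_neg hγ hδ hk] with s hs _
  exact mul_nonpos_of_nonneg_of_nonpos (by positivity) hs.le

lemma eventually_solution_le_add_div_of_mem_Ioo {k : ℝ} (hk : k ∈ Ioo (-1) 0) :
    ∀ᶠ s in atTop, φ s ≤ s + k / s := by
  refine eventually_solution_le_barrier hδ hφ (eventually_hasDerivAt_add_div k)
    (tendsto_one_sub_div_sq k) ?_
    (tendsto_one_add_sq_mul_riccatiFactor hγ hδ k (tendsto_add_div_div_self 1))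
    (by linarith [hk.1])
  filter_upwards [eventually_solution_le_add_div_of_pos hγ hδ hφ one_pos,
    eventually_mul_le_solution hγ hδ hφ one_half_pos, eventually_riccatiFactor_pos hγ hδ hk.2]
    with s hle hnonneg hpos _
  rw [zero_mul] at hnonneg
  gcongr

lemma eventually_add_div_le_solution_of_lt_neg_one {k : ℝ} (hk : k < -1) :
    ∀ᶠ s in atTop, s + k / s ≤ φ s := by
  have hthird : ∀ᶠ s in atTop, 1 / 3 * s ≤ φ s :=
    eventually_mul_le_solution hγ hδ hφ (by norm_num)
  have hthird_div : Tendsto (fun s : ℝ ↦ 1 / 3 * s / s) atTop (𝓝 (1 / 3)) := by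
    refine tendsto_const_nhds.congr' ?_
    filter_upwards [eventually_ne_atTop 0] with s hs using (mul_div_cancel_right₀ _ hs).symm
  have hten : ∀ᶠ s in atTop, s + -10 / s ≤ φ s :=
    eventually_add_div_le_solution_of_le hγ hδ hφ hthird hthird_div (by norm_num) (by norm_num)
  exact eventually_add_div_le_solution_of_le hγ hδ hφ hten (tendsto_add_div_div_self (-10)) one_pos
    (by linarith)

end Riccati

theorem riccati_first_order_asymptotics_general {γ δ φ : ℝ → ℝ}
    (hγ : γ =o[atTop] fun s ↦ (s ^ 2)⁻¹) (hδ : δ =o[atTop] fun s ↦ (s ^ 3)⁻¹)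
    (hφ : ∀ᶠ s in atTop,
      HasDerivAt φ ((1 + φ s ^ 2) * (1 + γ s - (1 / s + δ s) * φ s)) s) :
    Tendsto (fun s ↦ s * (φ s - s)) atTop (𝓝 (-1)) := by
  refine tendsto_order.2 ⟨fun l hl ↦ ?_, fun l hl ↦ ?_⟩
  · obtain ⟨k, hlk, hk⟩ := exists_between hl
    filter_upwards [eventually_add_div_le_solution_of_lt_neg_one hγ hδ hφ hk,
      eventually_gt_atTop 0] with s hle hs
    exact hlk.trans_le ((div_le_iff₀' hs).1 (le_sub_iff_add_le'.2 hle))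
  · obtain ⟨k, hk, hkl⟩ := exists_between (lt_min hl neg_one_lt_zero)
    obtain ⟨hkl, hk0⟩ := lt_min_iff.1 hkl
    filter_upwards [eventually_solution_le_add_div_of_mem_Ioo hγ hδ hφ ⟨hk, hk0⟩,
      eventually_gt_atTop 0] with s hle hs
    exact ((le_div_iff₀' hs).1 (sub_le_iff_le_add'.2 hle)).trans_lt hkl

/-- `s(φ(s) − s) → −1` as `s → ∞`, for a solution of the perturbed Riccati-type
equation for the slope of the translator's graphical end. -/
theorem riccati_first_order_asymptotics
    (s₀ C : ℝ) (hs₀ : 1 < s₀) (hC : 0 < C)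
    (γ δ φ φ' : ℝ → ℝ)
    (hγ : Continuous γ) (hδ : Continuous δ)
    (hbound : ∀ s ∈ Ici s₀, |γ s| + |δ s| ≤ C / s ^ 10)
    (hφ : ∀ s ∈ Ici s₀, HasDerivWithinAt φ (φ' s) (Ici s₀) s)
    (hφ' : ContinuousOn φ' (Ici s₀))
    (heq : ∀ s ∈ Ici s₀,
      φ' s = (1 + φ s ^ 2) * (1 + γ s - (1 / s + δ s) * φ s)) :
    Tendsto (fun s => s * (φ s - s)) atTop (nhds (-1)) := by
  have hge := eventually_ge_atTop s₀
  refine riccati_first_order_asymptotics_general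
    (isLittleO_inv_pow_of_abs_le (hge.mono fun s hs ↦
      (le_add_of_nonneg_right (abs_nonneg (δ s))).trans (hbound s hs)) (by norm_num))
    (isLittleO_inv_pow_of_abs_le (hge.mono fun s hs ↦
      (le_add_of_nonneg_left (abs_nonneg (γ s))).trans (hbound s hs)) (by norm_num)) ?_
  filter_upwards [eventually_gt_atTop s₀] with s hs
  exact heq s hs.le ▸ (hφ s hs.le).hasDerivAt (Ici_mem_nhds hs)
end

section
/- There exist a constant C' > 0 and s₁ ≥ s₀ such that |φ(s) − (s − 1/s)| ≤ C'/s² for all s ≥ s₁; that is, φ(s) = s − 1/s + O(s⁻²) as s → ∞. -/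
open Set Filter

open Asymptotics Topology

/-!
Away from its slow curve `x ≈ s` the equation drives `φ` back, so barriers trap the solution at
successively finer scales. If `β` is an upper barrier, in the sense that `φ' ≤ β' - 1 / s` wherever
`β ≤ φ`, then `φ ≤ β` eventually: `φ - β` must reach zero because `log` diverges, and it cannot
cross zero upwards afterwards.

The barriers `s / 4` and `2 * s` show that `φ` grows linearly, which absorbs `δ` into a single
error `e = γ - δ * φ = O(s⁻³)` in `φ' = (1 + φ²) * (1 - φ / s + e)`. The barriers `s ± 1` then give
`1 + φ² = s² + O(s)`. Near `x = s - 1 / s ± k / s²` the right-hand side is therefore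
`1 ∓ (k + O(1)) / s` with an `O(1)` that does not depend on `k`, so for large `k` these curves are
barriers as well.
-/

section Comparison

variable {f f' g g' B B' : ℝ → ℝ}

lemma frequently_nonpos_of_deriv_le_neg_s7 (hg : ∀ᶠ s in atTop, HasDerivAt g (g' s) s)
    (hB : ∀ᶠ s in atTop, HasDerivAt B (B' s) s) (hB_top : Tendsto B atTop atTop)
    (hle : ∀ᶠ s in atTop, 0 ≤ g s → g' s ≤ -B' s) :
    ∃ᶠ s in atTop, g s ≤ 0 := by
  intro hpos
  simp only [not_le] at hpos
  obtain ⟨a, ha⟩ := eventually_atTop.1 (hg.and (hB.and (hle.and hpos)))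
  have hderiv : ∀ s ∈ Ici a, HasDerivAt (g + B) (g' s + B' s) s :=
    fun s hs ↦ (ha s hs).1.add (ha s hs).2.1
  have hanti : AntitoneOn (g + B) (Ici a) := by
    refine antitoneOn_of_hasDerivWithinAt_nonpos (convex_Ici a)
      (fun s hs ↦ (hderiv s hs).continuousAt.continuousWithinAt)
      (fun s hs ↦ (hderiv s (interior_subset hs)).hasDerivWithinAt) fun s hs ↦ ?_
    obtain ⟨-, -, hle_s, hpos_s⟩ := ha s (interior_subset hs)
    linarith [hle_s hpos_s.le]
  have htop : Tendsto (g + B) atTop atTop :=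
    hB_top.zero_eventuallyLE_add_atTop (hpos.mono fun _ ↦ le_of_lt)
  obtain ⟨s, hlt, has⟩ :=
    ((htop.eventually_gt_atTop ((g + B) a)).and (eventually_ge_atTop a)).exists
  exact hlt.not_ge (hanti self_mem_Ici has has)

lemma eventually_nonpos_of_frequently_nonpos (hg : ∀ᶠ s in atTop, HasDerivAt g (g' s) s)
    (hneg : ∀ᶠ s in atTop, g s = 0 → g' s < 0) (hfreq : ∃ᶠ s in atTop, g s ≤ 0) :
    ∀ᶠ s in atTop, g s ≤ 0 := by
  obtain ⟨a, ha⟩ := eventually_atTop.1 (hg.and hneg)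
  obtain ⟨b, hgb, hab⟩ := (hfreq.and_eventually (eventually_ge_atTop a)).exists
  filter_upwards [eventually_ge_atTop b] with s hbs
  exact image_le_of_deriv_right_lt_deriv_boundary' (B := fun _ ↦ 0) (B' := fun _ ↦ 0)
    (fun x hx ↦ (ha x (hab.trans hx.1)).1.continuousAt.continuousWithinAt)
    (fun x hx ↦ (ha x (hab.trans hx.1)).1.hasDerivWithinAt) hgb continuousOn_const
    (fun x _ ↦ hasDerivWithinAt_const x _ 0) (fun x hx ↦ (ha x (hab.trans hx.1)).2)
    (right_mem_Icc.2 hbs)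

lemma eventually_le_of_deriv_add_inv_le (hf : ∀ᶠ s in atTop, HasDerivAt f (f' s) s)
    (hg : ∀ᶠ s in atTop, HasDerivAt g (g' s) s)
    (hle : ∀ᶠ s in atTop, g s ≤ f s → f' s + s⁻¹ ≤ g' s) :
    ∀ᶠ s in atTop, f s ≤ g s := by
  have hsub : ∀ᶠ s in atTop, HasDerivAt (f - g) (f' s - g' s) s := by
    filter_upwards [hf, hg] with s hfs hgs using hfs.sub hgs
  have hdrop : ∀ᶠ s in atTop, 0 ≤ (f - g) s → f' s - g' s ≤ -s⁻¹ := by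
    filter_upwards [hle] with s hles hnonneg
    linarith [hles (sub_nonneg.1 hnonneg)]
  have hlog : ∀ᶠ s : ℝ in atTop, HasDerivAt Real.log s⁻¹ s :=
    (eventually_ne_atTop 0).mono fun _ ↦ Real.hasDerivAt_log
  have hfreq := frequently_nonpos_of_deriv_le_neg_s7 hsub hlog Real.tendsto_log_atTop hdrop
  have hneg : ∀ᶠ s in atTop, (f - g) s = 0 → f' s - g' s < 0 := by
    filter_upwards [hdrop, eventually_gt_atTop 0] with s hdrops hs hzero
    linarith [hdrops hzero.ge, inv_pos.2 hs]
  exact (eventually_nonpos_of_frequently_nonpos hsub hneg hfreq).mono fun s ↦ sub_nonpos.1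

end Comparison

lemma eventually_inv_le_atTop {ε : ℝ} (hε : 0 < ε) : ∀ᶠ s : ℝ in atTop, s⁻¹ ≤ ε :=
  tendsto_inv_atTop_zero.eventually_le_const hε

lemma inv_add_nonneg_of_neg_one_le_mul {s q : ℝ} (hs : 0 < s) (hq : -1 ≤ s * q) :
    0 ≤ s⁻¹ + q := by
  have hmul : s * (s⁻¹ + q) = 1 + s * q := by rw [mul_add, mul_inv_cancel₀ hs.ne']
  exact nonneg_of_mul_nonneg_right (by linarith) hs

section LinearGrowth

variable {γ δ φ : ℝ → ℝ}

lemma eventually_div_four_le_of_riccati (hγ : Tendsto γ atTop (𝓝 0))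
    (hδ : Tendsto (fun s ↦ s * δ s) atTop (𝓝 0))
    (hφ : ∀ᶠ s in atTop,
      HasDerivAt φ ((1 + φ s ^ 2) * (1 + γ s - (s⁻¹ + δ s) * φ s)) s) :
    ∀ᶠ s in atTop, s / 4 ≤ φ s := by
  refine eventually_le_of_deriv_add_inv_le
    (.of_forall fun s ↦ (hasDerivAt_id s).div_const 4) hφ ?_
  filter_upwards [hγ.eventually_const_le (show (-1 / 8 : ℝ) < 0 by norm_num),
    hδ.eventually_const_le (show (-1 : ℝ) < 0 by norm_num),
    hδ.eventually_le_const (show (0 : ℝ) < 1 / 8 by norm_num),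
    eventually_gt_atTop 0, eventually_inv_le_atTop (show (0 : ℝ) < 1 / 4 by norm_num)]
    with s hγs hδs hδs' hs hr hx
  have hcoeff : 0 ≤ s⁻¹ + δ s := inv_add_nonneg_of_neg_one_le_mul hs (by linarith)
  have hfactor : 1 / 2 ≤ 1 + γ s - (s⁻¹ + δ s) * φ s := by
    calc (1 : ℝ) / 2 ≤ 1 + γ s - (1 + s * δ s) / 4 := by linarith
      _ = 1 + γ s - (s⁻¹ + δ s) * (s / 4) := by field_simp
      _ ≤ 1 + γ s - (s⁻¹ + δ s) * φ s := by gcongr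
  nlinarith [sq_nonneg (φ s)]

lemma eventually_le_two_mul_of_riccati (hγ : Tendsto γ atTop (𝓝 0))
    (hδ : Tendsto (fun s ↦ s * δ s) atTop (𝓝 0))
    (hφ : ∀ᶠ s in atTop,
      HasDerivAt φ ((1 + φ s ^ 2) * (1 + γ s - (s⁻¹ + δ s) * φ s)) s) :
    ∀ᶠ s in atTop, φ s ≤ 2 * s := by
  refine eventually_le_of_deriv_add_inv_le hφ
    (.of_forall fun s ↦ (hasDerivAt_id s).const_mul 2) ?_
  filter_upwards [hγ.eventually_le_const (show (0 : ℝ) < 1 / 8 by norm_num),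
    hδ.eventually_const_le (show (-1 / 8 : ℝ) < 0 by norm_num),
    eventually_gt_atTop 0, eventually_inv_le_atTop one_pos] with s hγs hδs hs hr hx
  have hcoeff : 0 ≤ s⁻¹ + δ s := inv_add_nonneg_of_neg_one_le_mul hs (by linarith)
  have hfactor : 1 + γ s - (s⁻¹ + δ s) * φ s ≤ 0 := by
    calc 1 + γ s - (s⁻¹ + δ s) * φ s ≤ 1 + γ s - (s⁻¹ + δ s) * (2 * s) := by gcongr
      _ = 1 + γ s - 2 * (1 + s * δ s) := by field_simp
      _ ≤ 0 := by linarith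
  have hderiv : (1 + φ s ^ 2) * (1 + γ s - (s⁻¹ + δ s) * φ s) ≤ 0 :=
    mul_nonpos_of_nonneg_of_nonpos (by positivity) hfactor
  linarith

end LinearGrowth

section ReducedEquation

variable {e φ : ℝ → ℝ}

lemma eventually_le_add_one_of_riccati (he : ∀ᶠ s in atTop, |e s| ≤ s⁻¹ / 2)
    (hφ : ∀ᶠ s in atTop, HasDerivAt φ ((1 + φ s ^ 2) * (1 - s⁻¹ * φ s + e s)) s) :
    ∀ᶠ s in atTop, φ s ≤ s + 1 := by
  refine eventually_le_of_deriv_add_inv_le hφ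
    (.of_forall fun s ↦ (hasDerivAt_id s).add_const 1) ?_
  filter_upwards [he, eventually_gt_atTop 0, eventually_inv_le_atTop one_pos] with s hes hs hr hx
  have hr₀ : 0 < s⁻¹ := inv_pos.2 hs
  have hfactor : 1 - s⁻¹ * φ s + e s ≤ 0 := by
    calc 1 - s⁻¹ * φ s + e s ≤ 1 - s⁻¹ * (s + 1) + s⁻¹ / 2 := by gcongr; exact le_of_abs_le hes
      _ = -(s⁻¹ / 2) := by field_simp; ring
      _ ≤ 0 := by linarith
  have hderiv : (1 + φ s ^ 2) * (1 - s⁻¹ * φ s + e s) ≤ 0 :=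
    mul_nonpos_of_nonneg_of_nonpos (by positivity) hfactor
  linarith

lemma eventually_sub_one_le_of_riccati (he : ∀ᶠ s in atTop, |e s| ≤ s⁻¹ / 2)
    (hφ : ∀ᶠ s in atTop, HasDerivAt φ ((1 + φ s ^ 2) * (1 - s⁻¹ * φ s + e s)) s)
    (hlinear : ∀ᶠ s in atTop, s / 4 ≤ φ s) :
    ∀ᶠ s in atTop, s - 1 ≤ φ s := by
  refine eventually_le_of_deriv_add_inv_le
    (.of_forall fun s ↦ (hasDerivAt_id s).sub_const 1) hφ ?_
  filter_upwards [he, hlinear, eventually_ge_atTop 64, eventually_inv_le_atTop one_pos]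
    with s hes hlin hs hr hx
  have hfactor : s⁻¹ / 2 ≤ 1 - s⁻¹ * φ s + e s := by
    calc s⁻¹ / 2 = 1 - s⁻¹ * (s - 1) + -(s⁻¹ / 2) := by field_simp; ring
      _ ≤ 1 - s⁻¹ * φ s + e s := by gcongr; exact neg_le_of_abs_le hes
  calc 1 + s⁻¹ ≤ s / 32 := by linarith
    _ = (s / 4) ^ 2 * (s⁻¹ / 2) := by field_simp; norm_num
    _ ≤ φ s ^ 2 * (s⁻¹ / 2) := by gcongr
    _ ≤ (1 + φ s ^ 2) * (1 - s⁻¹ * φ s + e s) := by gcongr; linarith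

lemma hasDerivAt_sub_inv_add_mul_inv_sq (k : ℝ) {s : ℝ} (hs : s ≠ 0) :
    HasDerivAt (fun s : ℝ ↦ s - s⁻¹ + k * s⁻¹ ^ 2) (1 + s⁻¹ ^ 2 - 2 * k * s⁻¹ ^ 3) s := by
  have hinv := hasDerivAt_inv hs
  refine (((hasDerivAt_id s).sub hinv).add ((hinv.pow 2).const_mul k)).congr_deriv ?_
  simp only [Nat.cast_ofNat, Nat.reduceSub, pow_one]
  field_simp
  ring

lemma eventually_le_sub_inv_add_of_riccati {L : ℝ} (he : ∀ᶠ s in atTop, |e s| ≤ L * s⁻¹ ^ 3)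
    (hφ : ∀ᶠ s in atTop, HasDerivAt φ ((1 + φ s ^ 2) * (1 - s⁻¹ * φ s + e s)) s)
    (hnonneg : ∀ᶠ s in atTop, 0 ≤ φ s) (hle : ∀ᶠ s in atTop, φ s ≤ s + 1) :
    ∀ᶠ s in atTop, φ s ≤ s - s⁻¹ + (L + 4) * s⁻¹ ^ 2 := by
  refine eventually_le_of_deriv_add_inv_le hφ ((eventually_ne_atTop 0).mono fun s ↦
    hasDerivAt_sub_inv_add_mul_inv_sq (L + 4)) ?_
  have hsmall : ∀ᶠ s : ℝ in atTop, 2 * L * s⁻¹ ^ 2 < 1 :=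
    ((tendsto_inv_atTop_zero.pow 2).const_mul (2 * L)).eventually_lt_const (by simp)
  filter_upwards [he, hnonneg, hle, hsmall, eventually_gt_atTop 0,
    eventually_inv_le_atTop (show (0 : ℝ) < 1 / 4 by norm_num)] with s hes hφ₀ hφ₁ hL hs hr hx
  have hsr : s * s⁻¹ = 1 := mul_inv_cancel₀ hs.ne'
  have hr₀ : 0 < s⁻¹ := inv_pos.2 hs
  generalize s⁻¹ = r at *
  have hfactor : 1 - r * φ s + e s ≤ r ^ 2 * (1 - 4 * r) := by
    calc 1 - r * φ s + e s ≤ 1 - r * (s - r + (L + 4) * r ^ 2) + L * r ^ 3 := by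
          gcongr; exact le_of_abs_le hes
      _ = r ^ 2 * (1 - 4 * r) := by linear_combination -hsr
  have hfactor₀ : 0 ≤ 1 - 4 * r := by linarith
  calc (1 + φ s ^ 2) * (1 - r * φ s + e s) + r
      ≤ (1 + (s + 1) ^ 2) * (r ^ 2 * (1 - 4 * r)) + r := by
        gcongr ?_ + r
        exact (mul_le_mul_of_nonneg_left hfactor (by positivity)).trans (by gcongr)
    _ = (1 + 2 * r + 2 * r ^ 2) * (1 - 4 * r) + r := by
        linear_combination (s * r + 1 + 2 * r) * (1 - 4 * r) * hsr
    _ ≤ 1 + r ^ 2 - 2 * (L + 4) * r ^ 3 := by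
        nlinarith [mul_pos hr₀ (sub_pos.2 hL), sq_nonneg r]

lemma eventually_sub_inv_sub_le_of_riccati {L : ℝ} (he : ∀ᶠ s in atTop, |e s| ≤ L * s⁻¹ ^ 3)
    (hφ : ∀ᶠ s in atTop, HasDerivAt φ ((1 + φ s ^ 2) * (1 - s⁻¹ * φ s + e s)) s)
    (hge : ∀ᶠ s in atTop, s - 1 ≤ φ s) :
    ∀ᶠ s in atTop, s - s⁻¹ + -(L + 4) * s⁻¹ ^ 2 ≤ φ s := by
  refine eventually_le_of_deriv_add_inv_le ((eventually_ne_atTop 0).mono fun s ↦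
    hasDerivAt_sub_inv_add_mul_inv_sq (-(L + 4))) hφ ?_
  have hsmall : ∀ᶠ s : ℝ in atTop, 7 * s⁻¹ + 2 * L * s⁻¹ ^ 2 < 1 :=
    ((tendsto_inv_atTop_zero.const_mul 7).add
      ((tendsto_inv_atTop_zero.pow 2).const_mul (2 * L))).eventually_lt_const (by simp)
  filter_upwards [he, hge, hsmall, eventually_ge_atTop 1] with s hes hφ₁ hL hs hx
  have hsr : s * s⁻¹ = 1 := mul_inv_cancel₀ (by positivity)
  have hr₀ : 0 < s⁻¹ := by positivity
  generalize s⁻¹ = r at *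
  have hfactor : r ^ 2 * (1 + 4 * r) ≤ 1 - r * φ s + e s := by
    calc r ^ 2 * (1 + 4 * r) = 1 - r * (s - r + -(L + 4) * r ^ 2) + -(L * r ^ 3) := by
          linear_combination hsr
      _ ≤ 1 - r * φ s + e s := by gcongr; exact neg_le_of_abs_le hes
  calc 1 + r ^ 2 - 2 * -(L + 4) * r ^ 3 + r ≤ (1 - 2 * r + 2 * r ^ 2) * (1 + 4 * r) := by
        nlinarith [mul_pos hr₀ (sub_pos.2 hL)]
    _ = (1 + (s - 1) ^ 2) * (r ^ 2 * (1 + 4 * r)) := by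
        linear_combination -(s * r + 1 - 2 * r) * (1 + 4 * r) * hsr
    _ ≤ (1 + φ s ^ 2) * (1 - r * φ s + e s) := by gcongr

lemma isBigO_sub_sub_inv_of_reduced_riccati (he : e =O[atTop] fun s : ℝ ↦ s⁻¹ ^ 3)
    (hφ : ∀ᶠ s in atTop, HasDerivAt φ ((1 + φ s ^ 2) * (1 - s⁻¹ * φ s + e s)) s)
    (hlinear : ∀ᶠ s in atTop, s / 4 ≤ φ s) :
    (fun s ↦ φ s - (s - s⁻¹)) =O[atTop] fun s : ℝ ↦ s⁻¹ ^ 2 := by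
  obtain ⟨L, hL⟩ := he.bound
  have he_abs : ∀ᶠ s in atTop, |e s| ≤ L * s⁻¹ ^ 3 := by
    filter_upwards [hL, eventually_gt_atTop 0] with s hs hs₀
    rwa [Real.norm_eq_abs, Real.norm_of_nonneg (by positivity)] at hs
  have he_small : ∀ᶠ s in atTop, |e s| ≤ s⁻¹ / 2 := by
    have hsmall : ∀ᶠ s : ℝ in atTop, L * s⁻¹ ^ 2 < 1 / 2 :=
      ((tendsto_inv_atTop_zero.pow 2).const_mul L).eventually_lt_const (by simp)
    filter_upwards [he_abs, hsmall, eventually_gt_atTop 0] with s hes hLs hs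
    nlinarith [mul_pos (inv_pos.2 hs) (sub_pos.2 hLs)]
  have hnonneg : ∀ᶠ s in atTop, 0 ≤ φ s := by
    filter_upwards [hlinear, eventually_gt_atTop 0] with s hlin hs
    linarith
  have hupper := eventually_le_sub_inv_add_of_riccati he_abs hφ hnonneg
    (eventually_le_add_one_of_riccati he_small hφ)
  have hlower := eventually_sub_inv_sub_le_of_riccati he_abs hφ
    (eventually_sub_one_le_of_riccati he_small hφ hlinear)
  refine .of_bound (L + 4) ?_
  filter_upwards [hupper, hlower] with s hu hl
  rw [Real.norm_eq_abs, Real.norm_of_nonneg (by positivity), abs_le]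
  constructor <;> linarith

end ReducedEquation

theorem riccati_asymptotic_lemma_general {γ δ φ : ℝ → ℝ}
    (hγ : γ =O[atTop] fun s : ℝ ↦ s⁻¹ ^ 3) (hδ : δ =O[atTop] fun s : ℝ ↦ s⁻¹ ^ 4)
    (hφ : ∀ᶠ s in atTop,
      HasDerivAt φ ((1 + φ s ^ 2) * (1 + γ s - (s⁻¹ + δ s) * φ s)) s) :
    (fun s ↦ φ s - (s - s⁻¹)) =O[atTop] fun s : ℝ ↦ s⁻¹ ^ 2 := by
  have hinv_cube : Tendsto (fun s : ℝ ↦ s⁻¹ ^ 3) atTop (𝓝 0) := by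
    simpa using (tendsto_inv_atTop_zero (𝕜 := ℝ)).pow 3
  have hcancel : (fun s : ℝ ↦ s⁻¹ ^ 4 * s) =ᶠ[atTop] fun s ↦ s⁻¹ ^ 3 := by
    filter_upwards [eventually_ne_atTop 0] with s hs
    field_simp
  have hδ_mul : (fun s ↦ δ s * s) =O[atTop] fun s : ℝ ↦ s⁻¹ ^ 3 :=
    (hδ.mul (isBigO_refl id atTop)).trans_eventuallyEq hcancel
  have hγ_zero := hγ.trans_tendsto hinv_cube
  have hδ_zero : Tendsto (fun s ↦ s * δ s) atTop (𝓝 0) := by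
    simpa only [mul_comm] using hδ_mul.trans_tendsto hinv_cube
  have hlower := eventually_div_four_le_of_riccati hγ_zero hδ_zero hφ
  have hφ_linear : φ =O[atTop] fun s ↦ s := by
    refine .of_bound 2 ?_
    filter_upwards [hlower, eventually_le_two_mul_of_riccati hγ_zero hδ_zero hφ,
      eventually_gt_atTop 0] with s hl hu hs
    rwa [Real.norm_of_nonneg (by linarith), Real.norm_of_nonneg hs.le]
  have herror : (fun s ↦ γ s - δ s * φ s) =O[atTop] fun s : ℝ ↦ s⁻¹ ^ 3 :=
    hγ.sub ((hδ.mul hφ_linear).trans_eventuallyEq hcancel)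
  refine isBigO_sub_sub_inv_of_reduced_riccati herror (hφ.mono fun s hs ↦ hs.congr_deriv ?_) hlower
  ring

lemma isBigO_inv_pow_of_abs_le_div {f : ℝ → ℝ} {C s₀ : ℝ} {m n : ℕ} (hmn : m ≤ n)
    (hf : ∀ s ∈ Ici s₀, |f s| ≤ C / s ^ n) : f =O[atTop] fun s : ℝ ↦ s⁻¹ ^ m := by
  have hn : f =O[atTop] fun s : ℝ ↦ s⁻¹ ^ n := by
    refine .of_bound C ?_
    filter_upwards [eventually_ge_atTop s₀, eventually_ge_atTop 0] with s hs hs'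
    rw [Real.norm_eq_abs, Real.norm_of_nonneg (by positivity), inv_pow, ← div_eq_mul_inv]
    exact hf s hs
  refine hn.trans (.of_bound' ?_)
  filter_upwards [eventually_ge_atTop 1] with s hs
  rw [Real.norm_of_nonneg (by positivity), Real.norm_of_nonneg (by positivity)]
  exact pow_le_pow_of_le_one (by positivity) (inv_le_one_of_one_le₀ hs) hmn

lemma exists_abs_le_div_of_isBigO_inv_pow {f : ℝ → ℝ} {n : ℕ} (s₀ : ℝ)
    (hf : f =O[atTop] fun s : ℝ ↦ s⁻¹ ^ n) :
    ∃ C > 0, ∃ s₁, s₀ ≤ s₁ ∧ ∀ s ≥ s₁, |f s| ≤ C / s ^ n := by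
  obtain ⟨C, hC, hbound⟩ := hf.exists_pos
  obtain ⟨s₁, hs₁⟩ := eventually_atTop.1 (hbound.bound.and (eventually_ge_atTop 0))
  refine ⟨C, hC, max s₀ s₁, le_max_left _ _, fun s hs ↦ ?_⟩
  obtain ⟨hle, hs₀⟩ := hs₁ s (le_of_max_le_right hs)
  rwa [Real.norm_eq_abs, Real.norm_of_nonneg (by positivity), inv_pow, ← div_eq_mul_inv] at hle

/-- The key asymptotic lemma: `φ(s) = s − 1/s + O(s⁻²)` for a solution of the
perturbed Riccati-type equation for the slope of the translator's graphical end. -/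
theorem riccati_asymptotic_lemma
    (s₀ C : ℝ) (hs₀ : 1 < s₀) (hC : 0 < C)
    (γ δ φ φ' : ℝ → ℝ)
    (hγ : Continuous γ) (hδ : Continuous δ)
    (hbound : ∀ s ∈ Ici s₀, |γ s| + |δ s| ≤ C / s ^ 10)
    (hφ : ∀ s ∈ Ici s₀, HasDerivWithinAt φ (φ' s) (Ici s₀) s)
    (hφ' : ContinuousOn φ' (Ici s₀))
    (heq : ∀ s ∈ Ici s₀,
      φ' s = (1 + φ s ^ 2) * (1 + γ s - (1 / s + δ s) * φ s)) :
    ∃ C' > (0 : ℝ), ∃ s₁, s₀ ≤ s₁ ∧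
      ∀ s ≥ s₁, |φ s - (s - 1 / s)| ≤ C' / s ^ 2 := by
  simp only [one_div] at heq ⊢
  refine exists_abs_le_div_of_isBigO_inv_pow s₀ (riccati_asymptotic_lemma_general
    (isBigO_inv_pow_of_abs_le_div (n := 10) (by norm_num) fun s hs ↦
      (le_add_of_nonneg_right (abs_nonneg _)).trans (hbound s hs))
    (isBigO_inv_pow_of_abs_le_div (n := 10) (by norm_num) fun s hs ↦
      (le_add_of_nonneg_left (abs_nonneg _)).trans (hbound s hs)) ?_)
  filter_upwards [eventually_gt_atTop s₀] with s hs
  exact heq s hs.le ▸ (hφ s hs.le).hasDerivAt (Ici_mem_nhds hs)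
end

section
/- Let s₀ > 0 and let λ : [s₀, ∞) → ℝ be continuously differentiable with λ(s)/s → 0 as s → ∞. Suppose λ'(s) = −(λ(s) + 1)·s + e(s) for all s ≥ s₀, where e : [s₀, ∞) → ℝ satisfies e(s)/s → 0 as s → ∞. Then λ(s) → −1 as s → ∞. -/
open Set Filter

/-!
Let `A` be a primitive of the attraction rate `a`; here `a s = s` and `A s = s ^ 2 / 2`. Multiplying
`l' = -a (l - c) + e` by the integrating factor `exp A` gives `(exp A • (l - c))' = exp A • e`,
which is negligible compared with `(exp A)' = a exp A`. Since `exp A → ∞`, this comparison of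
derivatives integrates, as in l'Hôpital's rule, to `exp A • (l - c) = o(exp A)`, that is, `l → c`.
-/

open Asymptotics Topology

section

variable {E : Type*} [NormedAddCommGroup E] [NormedSpace ℝ E]

theorem norm_image_sub_le_sub_of_norm_deriv_right_le_deriv {g g' : ℝ → E} {B B' : ℝ → ℝ} {a b : ℝ}
    (hab : a ≤ b) (hg : ContinuousOn g (Icc a b))
    (hg' : ∀ x ∈ Ico a b, HasDerivWithinAt g (g' x) (Ici x) x) (hB : ContinuousOn B (Icc a b))
    (hB' : ∀ x ∈ Ico a b, HasDerivWithinAt B (B' x) (Ici x) x)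
    (bound : ∀ x ∈ Ico a b, ‖g' x‖ ≤ B' x) : ‖g b - g a‖ ≤ B b - B a :=
  image_norm_le_of_norm_deriv_right_le_deriv_boundary' (f := fun x ↦ g x - g a)
    (B := fun x ↦ B x - B a) (hg.sub continuousOn_const) (fun x hx ↦ (hg' x hx).sub_const _)
    (by simp) (hB.sub continuousOn_const) (fun x hx ↦ (hB' x hx).sub_const _) bound
    (right_mem_Icc.2 hab)

theorem isLittleO_atTop_of_deriv_isLittleO {g g' : ℝ → E} {B B' : ℝ → ℝ}
    (hg : ∀ᶠ s in atTop, HasDerivAt g (g' s) s) (hB : ∀ᶠ s in atTop, HasDerivAt B (B' s) s)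
    (hB'_nonneg : ∀ᶠ s in atTop, 0 ≤ B' s) (hB_top : Tendsto B atTop atTop)
    (hgB : g' =o[atTop] B') : g =o[atTop] B := by
  refine .of_bound fun ε hε ↦ ?_
  obtain ⟨S, hS⟩ := eventually_atTop.1
    (hg.and (hB.and (hB'_nonneg.and (hgB.bound (half_pos hε)))))
  have hg_cont : ContinuousOn g (Ici S) := fun s hs ↦
    (hS s hs).1.continuousAt.continuousWithinAt
  have hB_cont : ContinuousOn B (Ici S) := fun s hs ↦
    (hS s hs).2.1.continuousAt.continuousWithinAt
  have increment_le : ∀ s ≥ S, ‖g s - g S‖ ≤ ε / 2 * B s - ε / 2 * B S := fun s hs ↦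
    norm_image_sub_le_sub_of_norm_deriv_right_le_deriv (B := fun s ↦ ε / 2 * B s) hs
      (hg_cont.mono Icc_subset_Ici_self) (fun x hx ↦ (hS x hx.1).1.hasDerivWithinAt)
      ((hB_cont.mono Icc_subset_Ici_self).const_mul _)
      (fun x hx ↦ ((hS x hx.1).2.1.const_mul _).hasDerivWithinAt)
      fun x hx ↦ by
        obtain ⟨-, -, hB'x, hgx⟩ := hS x hx.1
        rwa [Real.norm_of_nonneg hB'x] at hgx
  have initial_le : ∀ᶠ s in atTop, ‖g S‖ - ε / 2 * B S ≤ ε / 2 * B s :=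
    (hB_top.const_mul_atTop (half_pos hε)).eventually_ge_atTop _
  filter_upwards [eventually_ge_atTop S, initial_le] with s hs h_initial
  calc ‖g s‖ ≤ ‖g S‖ + ‖g s - g S‖ := norm_le_norm_add_norm_sub' ..
    _ ≤ ε * B s := by linarith [increment_le s hs]
    _ ≤ ε * ‖B s‖ := by gcongr; exact Real.le_norm_self _

theorem hasDerivAt_exp_smul_sub {A : ℝ → ℝ} {l : ℝ → E} {a s : ℝ} {c e : E}
    (hA : HasDerivAt A a s) (hl : HasDerivAt l (-a • (l s - c) + e) s) :
    HasDerivAt (fun t ↦ Real.exp (A t) • (l t - c)) (Real.exp (A s) • e) s :=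
  (hA.exp.fun_smul (hl.sub_const c)).congr_deriv (by module)

theorem sublinear_relaxation_to_neg_one_general {A a : ℝ → ℝ} {l e : ℝ → E} {c : E}
    (hA : ∀ᶠ s in atTop, HasDerivAt A (a s) s) (ha : ∀ᶠ s in atTop, 0 ≤ a s)
    (hA_top : Tendsto A atTop atTop)
    (hl : ∀ᶠ s in atTop, HasDerivAt l (-a s • (l s - c) + e s) s) (he : e =o[atTop] a) :
    Tendsto l atTop (𝓝 c) := by
  have exp_smul_e : (fun s ↦ Real.exp (A s) • e s) =o[atTop] fun s ↦ Real.exp (A s) * a s :=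
    (isBigO_refl (fun s ↦ Real.exp (A s)) atTop).smul_isLittleO he
  have exp_smul_sub : (fun s ↦ Real.exp (A s) • (l s - c)) =o[atTop] fun s ↦ Real.exp (A s) :=
    isLittleO_atTop_of_deriv_isLittleO
      (by filter_upwards [hA, hl] with s hAs hls using hasDerivAt_exp_smul_sub hAs hls)
      (hA.mono fun s hAs ↦ hAs.exp) (ha.mono fun s has ↦ by positivity)
      (Real.tendsto_exp_atTop.comp hA_top) exp_smul_e
  have sub_isLittleO : (fun s ↦ l s - c) =o[atTop] fun _ ↦ (1 : ℝ) := by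
    simpa [smul_smul, ← Real.exp_add] using
      (isBigO_refl (fun s ↦ Real.exp (-A s)) atTop).smul_isLittleO exp_smul_sub
  exact tendsto_sub_nhds_zero_iff.1 ((isLittleO_one_iff ℝ).1 sub_isLittleO)

theorem hasDerivAt_sq_div_two (s : ℝ) : HasDerivAt (fun t : ℝ ↦ t ^ 2 / 2) s s := by
  simpa using (hasDerivAt_pow 2 s).div_const 2

theorem tendsto_sq_div_two_atTop : Tendsto (fun s : ℝ ↦ s ^ 2 / 2) atTop atTop :=
  (tendsto_pow_atTop two_ne_zero).atTop_div_const two_pos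

end

/-- Relaxation step: a sub-linear solution of `λ' = −(λ + 1)s + o(s)` converges
to the equilibrium value `−1`. -/
theorem sublinear_relaxation_to_neg_one
    (s₀ : ℝ) (hs₀ : 0 < s₀)
    (l l' e : ℝ → ℝ)
    (hl : ∀ s ∈ Ici s₀, HasDerivWithinAt l (l' s) (Ici s₀) s)
    (hl' : ContinuousOn l' (Ici s₀))
    (hsub : Tendsto (fun s => l s / s) atTop (nhds 0))
    (heq : ∀ s ∈ Ici s₀, l' s = -(l s + 1) * s + e s)
    (he : Tendsto (fun s => e s / s) atTop (nhds 0)) :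
    Tendsto l atTop (nhds (-1)) := by
  have hl_ode : ∀ᶠ s in atTop, HasDerivAt l (-s • (l s - -1) + e s) s := by
    filter_upwards [eventually_gt_atTop s₀] with s hs
    refine ((hl s hs.le).hasDerivAt (Ici_mem_nhds hs)).congr_deriv ?_
    rw [heq s hs.le, smul_eq_mul]
    ring
  have he_isLittleO : e =o[atTop] fun s ↦ s :=
    (isLittleO_iff_tendsto' ((eventually_ne_atTop 0).mono fun _ hs h ↦ absurd h hs)).2 he
  exact sublinear_relaxation_to_neg_one_general (.of_forall hasDerivAt_sq_div_two)
    (eventually_ge_atTop 0) tendsto_sq_div_two_atTop hl_ode he_isLittleO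
end

section
/- Let s₀ > 0 and let μ : [s₀, ∞) → ℝ be continuously differentiable with μ(s)/s² → 0 as s → ∞. Suppose μ'(s) = −(μ(s) + 2)·s + e(s) for all s ≥ s₀, where e : [s₀, ∞) → ℝ satisfies e(s)/s → 0 as s → ∞. Then μ(s) → −2 as s → ∞. -/
open Set Filter

/-!
With `A` a primitive of the relaxation rate `a`, the integrating factor `exp A` turns
`v' = -a (v - c) + e` into `(exp A (v - c))' = exp A e`. Where `‖e‖ ≤ ε a`, the right-hand side is
at most `ε (exp A)'` in norm, so that `‖v - c‖` is bounded by `ε` plus a multiple of `exp (-A)`.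
For `a s = s` the decaying factor is `exp (-s² / 2)`.
-/

section Relaxation

variable {E : Type*} [NormedAddCommGroup E] [NormedSpace ℝ E]
  {A a : ℝ → ℝ} {v e : ℝ → E} {c : E}

theorem hasDerivWithinAt_exp_smul_sub_of_relaxation {D : Set ℝ} {t : ℝ}
    (hA : HasDerivWithinAt A (a t) D t)
    (hv : HasDerivWithinAt v (-a t • (v t - c) + e t) D t) :
    HasDerivWithinAt (fun s => Real.exp (A s) • (v s - c)) (Real.exp (A t) • e t) D t :=
  (hA.exp.smul (hv.sub_const c)).congr_deriv (by module)

theorem norm_exp_smul_sub_le_of_relaxation {S T ε : ℝ}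
    (hA_cont : ContinuousOn A (Icc S T)) (hv_cont : ContinuousOn v (Icc S T))
    (hA : ∀ t ∈ Ico S T, HasDerivWithinAt A (a t) (Ici t) t)
    (hv : ∀ t ∈ Ico S T, HasDerivWithinAt v (-a t • (v t - c) + e t) (Ici t) t)
    (he : ∀ t ∈ Ico S T, ‖e t‖ ≤ ε * a t) {t : ℝ} (ht : t ∈ Icc S T) :
    ‖Real.exp (A t) • (v t - c)‖ ≤
      Real.exp (A S) * ‖v S - c‖ + ε * (Real.exp (A t) - Real.exp (A S)) := by
  refine image_norm_le_of_norm_deriv_right_le_deriv_boundary'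
    (f' := fun t => Real.exp (A t) • e t) (B' := fun t => ε * (Real.exp (A t) * a t))
    (by fun_prop) (fun t ht => hasDerivWithinAt_exp_smul_sub_of_relaxation (hA t ht) (hv t ht))
    (by simp [norm_smul]) (by fun_prop)
    (fun t ht => (((hA t ht).exp.sub_const _).const_mul ε).const_add _) (fun t ht => ?_) ht
  calc ‖Real.exp (A t) • e t‖ = Real.exp (A t) * ‖e t‖ := by simp [norm_smul]
    _ ≤ Real.exp (A t) * (ε * a t) := by gcongr; exact he t ht
    _ = ε * (Real.exp (A t) * a t) := by ring

theorem norm_sub_le_of_relaxation {S T ε : ℝ} (hST : S ≤ T)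
    (hA_cont : ContinuousOn A (Icc S T)) (hv_cont : ContinuousOn v (Icc S T))
    (hA : ∀ t ∈ Ico S T, HasDerivWithinAt A (a t) (Ici t) t)
    (hv : ∀ t ∈ Ico S T, HasDerivWithinAt v (-a t • (v t - c) + e t) (Ici t) t)
    (he : ∀ t ∈ Ico S T, ‖e t‖ ≤ ε * a t) :
    ‖v T - c‖ ≤ Real.exp (A S - A T) * ‖v S - c‖ + ε * (1 - Real.exp (A S - A T)) := by
  have weighted :=
    norm_exp_smul_sub_le_of_relaxation hA_cont hv_cont hA hv he (right_mem_Icc.2 hST)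
  rw [norm_smul, Real.norm_of_nonneg (Real.exp_pos _).le] at weighted
  refine le_of_mul_le_mul_left (weighted.trans_eq ?_) (Real.exp_pos (A T))
  rw [Real.exp_sub]
  field_simp

theorem tendsto_of_relaxation
    (hA : ∀ᶠ s in atTop, HasDerivAt A (a s) s) (ha : ∀ᶠ s in atTop, 0 ≤ a s)
    (hA_top : Tendsto A atTop atTop)
    (hv : ∀ᶠ s in atTop, HasDerivAt v (-a s • (v s - c) + e s) s)
    (he : e =o[atTop] a) :
    Tendsto v atTop (nhds c) := by
  rw [Metric.tendsto_nhds]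
  intro δ hδ
  have he_le : ∀ᶠ s in atTop, ‖e s‖ ≤ δ / 2 * a s := by
    filter_upwards [he.bound (half_pos hδ), ha] with s hs has
    rwa [Real.norm_of_nonneg has] at hs
  obtain ⟨S, hS⟩ := eventually_atTop.1 (hA.and (hv.and he_le))
  choose hA_deriv hv_deriv he_bound using hS
  have exp_decay : Tendsto (fun s => Real.exp (A S - A s)) atTop (nhds 0) :=
    Real.tendsto_exp_atBot.comp (tendsto_const_nhds.add_atBot (tendsto_neg_atTop_atBot.comp hA_top))
  have bound_tendsto : Tendsto
      (fun s => Real.exp (A S - A s) * ‖v S - c‖ + δ / 2 * (1 - Real.exp (A S - A s)))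
      atTop (nhds (δ / 2)) := by
    simpa using (exp_decay.mul_const ‖v S - c‖).add ((exp_decay.const_sub 1).const_mul (δ / 2))
  filter_upwards [eventually_ge_atTop S, bound_tendsto.eventually_lt_const (half_lt_self hδ)]
    with s hs bound_lt
  rw [dist_eq_norm]
  refine (norm_sub_le_of_relaxation (a := a) (e := e) hs ?_ ?_ ?_ ?_ ?_).trans_lt bound_lt
  · exact HasDerivAt.continuousOn fun t ht => hA_deriv t ht.1
  · exact HasDerivAt.continuousOn fun t ht => hv_deriv t ht.1
  · exact fun t ht => (hA_deriv t ht.1).hasDerivWithinAt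
  · exact fun t ht => (hv_deriv t ht.1).hasDerivWithinAt
  · exact fun t ht => he_bound t ht.1

theorem subquadratic_relaxation_to_neg_two_general {s₀ : ℝ}
    (hv : ∀ s ∈ Ici s₀, HasDerivWithinAt v (-s • (v s - c) + e s) (Ici s₀) s)
    (he : e =o[atTop] fun s : ℝ => s) :
    Tendsto v atTop (nhds c) := by
  have primitive : ∀ s : ℝ, HasDerivAt (fun s => s ^ 2 / 2) s s := fun s =>
    ((hasDerivAt_pow 2 s).div_const 2).congr_deriv (by simp)
  have primitive_atTop : Tendsto (fun s : ℝ => s ^ 2 / 2) atTop atTop :=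
    (tendsto_pow_atTop two_ne_zero).atTop_div_const two_pos
  have v_deriv : ∀ᶠ s in atTop, HasDerivAt v (-s • (v s - c) + e s) s :=
    (eventually_gt_atTop s₀).mono fun s hs => (hv s hs.le).hasDerivAt (Ici_mem_nhds hs)
  exact tendsto_of_relaxation (.of_forall primitive) (eventually_ge_atTop 0) primitive_atTop
    v_deriv he

end Relaxation

/-- Second relaxation step: a sub-quadratic solution of `μ' = −(μ + 2)s + o(s)`
converges to the equilibrium value `−2`. -/
theorem subquadratic_relaxation_to_neg_two
    (s₀ : ℝ) (hs₀ : 0 < s₀)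
    (μ μ' e : ℝ → ℝ)
    (hμ : ∀ s ∈ Ici s₀, HasDerivWithinAt μ (μ' s) (Ici s₀) s)
    (hμ' : ContinuousOn μ' (Ici s₀))
    (hsub : Tendsto (fun s => μ s / s ^ 2) atTop (nhds 0))
    (heq : ∀ s ∈ Ici s₀, μ' s = -(μ s + 2) * s + e s)
    (he : Tendsto (fun s => e s / s) atTop (nhds 0)) :
    Tendsto μ atTop (nhds (-2)) := by
  exact subquadratic_relaxation_to_neg_two_general (e := e)
    (fun s hs => (hμ s hs).congr_deriv (by rw [heq s hs, smul_eq_mul]; ring))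
    (Asymptotics.isLittleO_of_tendsto' ((eventually_ne_atTop 0).mono fun _ hs h => absurd h hs) he)
end

section
/- Let z₀ > 1 and C > 0. Let f : [z₀, ∞) → ℝ be twice continuously differentiable with f'(z) > 0 and f(z) > 0 for all z ≥ z₀, f(z) → ∞ as z → ∞, and f(z)² ≤ 8z for all z ≥ z₀. Suppose f satisfies −f'(z) = (1 + a(z))·f''(z)/(1 + f'(z)²) − 1/f(z) + b(z) for all z ≥ z₀, where a, b : ℝ → ℝ are continuous with |a(z)| + |b(z)| ≤ C/z^10 for all z ≥ z₀. Let z : [f(z₀), ∞) → ℝ be the inverse function of f. Then z is twice continuously differentiable and satisfies 1 = (1 + α(s))·z''(s)/(1 + z'(s)²) + (1/s + β(s))·z'(s) for all s ≥ f(z₀), where α(s) = a(z(s)) and β(s) = −b(z(s)) satisfy |α(s)| + |β(s)| ≤ C'/s^20 for some constant C' > 0 and all s large enough. -/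
open Set Filter

/-!
Since `f' > 0`, the inverse `g` of `f` has derivatives `g' = 1 / f'` and `g'' = -f'' / f' ^ 3`,
taken at `g s`. Hence `g'' / (1 + g' ^ 2) = -(f'' / (1 + f' ^ 2)) / f'`, so dividing the equation
for `f` by `-f'` gives the equation for `g`. The bound `s ^ 2 = f (g s) ^ 2 ≤ K * g s` makes `g`
grow quadratically, which doubles the decay exponent of the error terms.
-/

section InverseContinuity

open Topology

variable {α β : Type*} [LinearOrder α] [LinearOrder β] [TopologicalSpace β] [OrderTopology β]
  {f : α → β} {g : β → α} {D : Set α} {E : Set β}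

lemma eventually_lt_rightInvOn_of_strictMonoOn [D.OrdConnected] (hf : StrictMonoOn f D)
    (hgD : MapsTo g E D) (hfg : RightInvOn g f E) {s : β} (hs : s ∈ E) {c : α} (hc : c < g s) :
    ∀ᶠ t in 𝓝[E] s, c < g t := by
  by_cases hcD : c ∈ D
  · have hfc : f c < s := hfg hs ▸ hf hcD (hgD hs) hc
    filter_upwards [self_mem_nhdsWithin, mem_nhdsWithin_of_mem_nhds (Ioi_mem_nhds hfc)]
      with t ht hct
    exact (hf.lt_iff_lt hcD (hgD ht)).1 ((hfg ht).symm ▸ hct)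
  · filter_upwards [self_mem_nhdsWithin] with t ht
    by_contra! htc
    exact hcD (OrdConnected.out ‹_› (hgD ht) (hgD hs) ⟨htc, hc.le⟩)

lemma continuousOn_rightInvOn_of_strictMonoOn [TopologicalSpace α] [OrderTopology α]
    [D.OrdConnected] (hf : StrictMonoOn f D) (hgD : MapsTo g E D) (hfg : RightInvOn g f E) :
    ContinuousOn g E := fun _ hs =>
  tendsto_order.2
    ⟨fun _ hc => eventually_lt_rightInvOn_of_strictMonoOn hf hgD hfg hs hc,
      fun _ hc => eventually_lt_rightInvOn_of_strictMonoOn (α := αᵒᵈ) (β := βᵒᵈ)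
        (D := OrderDual.ofDual ⁻¹' D) hf.dual hgD hfg hs hc⟩

end InverseContinuity

section InverseDerivatives

variable {𝕜 : Type*} [NontriviallyNormedField 𝕜] {g : 𝕜 → 𝕜} {D E : Set 𝕜} {s : 𝕜}

lemma hasDerivWithinAt_rightInvOn {f : 𝕜 → 𝕜} {f' : 𝕜} (hf : HasDerivWithinAt f f' D (g s))
    (hf' : f' ≠ 0) (hg : ContinuousWithinAt g E s) (hgD : MapsTo g E D)
    (hfg : RightInvOn g f E) (hs : s ∈ E) : HasDerivWithinAt g f'⁻¹ E s := by
  have hf_equiv : HasFDerivWithinAt f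
      (ContinuousLinearEquiv.unitsEquivAut 𝕜 (Units.mk0 f' hf') : 𝕜 →L[𝕜] 𝕜) D (g s) := hf
  exact HasFDerivWithinAt.of_local_left_inverse (hg.tendsto_nhdsWithin hgD) hf_equiv hs
    (eventually_mem_nhdsWithin.mono fun _ ht => hfg ht)

lemma hasDerivWithinAt_inv_deriv_comp {f' : 𝕜 → 𝕜} {f'' : 𝕜}
    (hg : HasDerivWithinAt g (f' (g s))⁻¹ E s) (hf' : HasDerivWithinAt f' f'' D (g s))
    (hf'0 : f' (g s) ≠ 0) (hgD : MapsTo g E D) :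
    HasDerivWithinAt (fun t => (f' (g t))⁻¹) (-f'' / f' (g s) ^ 3) E s := by
  refine ((hf'.comp s hg hgD).inv hf'0).congr_deriv ?_
  simp only [Function.comp_apply]
  field_simp

end InverseDerivatives

section PointwiseAlgebra

variable {F : Type*} [Field F] [LinearOrder F] [IsStrictOrderedRing F]

lemma graphical_ode_of_cylindrical_ode {p q r a b : F} (hp : p ≠ 0)
    (hode : -p = (1 + a) * q / (1 + p ^ 2) - r + b) :
    1 = (1 + a) * (-q / p ^ 3) / (1 + p⁻¹ ^ 2) + (r + -b) * p⁻¹ := by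
  have curvature_inverse : (1 + a) * (-q / p ^ 3) / (1 + p⁻¹ ^ 2)
      = -((1 + a) * q / (1 + p ^ 2)) / p := by
    have : 1 + p ^ 2 ≠ 0 := by positivity
    field_simp
    ring
  have curvature_eq : (1 + a) * q / (1 + p ^ 2) = -p + r - b := by linear_combination -hode
  rw [curvature_inverse, curvature_eq]
  field_simp
  ring

lemma le_mul_pow_div_pow_of_le_div_pow {x C K z w : F} {n : ℕ} (hx : 0 ≤ x) (hw : 0 < w)
    (hwz : w ≤ K * z) (hxz : x ≤ C / z ^ n) : x ≤ C * K ^ n / w ^ n := by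
  have hKz : 0 < K * z := hw.trans_le hwz
  have hK : K ≠ 0 := left_ne_zero_of_mul hKz.ne'
  have hxKz : x ≤ C * K ^ n / (K * z) ^ n := by
    rwa [mul_pow, mul_comm C, mul_div_mul_left _ _ (pow_ne_zero n hK)]
  have hCK : 0 ≤ C * K ^ n := by
    simpa [div_mul_cancel₀ _ (pow_pos hKz n).ne'] using
      mul_nonneg (hx.trans hxKz) (pow_pos hKz n).le
  exact hxKz.trans (by gcongr)

end PointwiseAlgebra

theorem inverse_function_graphical_translator_ode_general
    {D E : Set ℝ} (hD : Convex ℝ D) {C K : ℝ} {n : ℕ} {f f' f'' a b g : ℝ → ℝ}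
    (hf : ∀ z ∈ D, HasDerivWithinAt f (f' z) D z)
    (hf' : ∀ z ∈ D, HasDerivWithinAt f' (f'' z) D z)
    (hf'' : ContinuousOn f'' D)
    (hf'pos : ∀ z ∈ D, 0 < f' z)
    (hf0 : ∀ z ∈ D, f z ≠ 0)
    (hfsq : ∀ z ∈ D, f z ^ 2 ≤ K * z)
    (hab : ∀ z ∈ D, |a z| + |b z| ≤ C / z ^ n)
    (hode : ∀ z ∈ D, -f' z = (1 + a z) * f'' z / (1 + f' z ^ 2) - 1 / f z + b z)
    (hgD : MapsTo g E D) (hfg : RightInvOn g f E) :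
    ∃ g' g'' : ℝ → ℝ,
      (∀ s ∈ E, HasDerivWithinAt g (g' s) E s) ∧
      (∀ s ∈ E, HasDerivWithinAt g' (g'' s) E s) ∧
      ContinuousOn g'' E ∧
      (∀ s ∈ E, 1 = (1 + a (g s)) * g'' s / (1 + g' s ^ 2) + (1 / s + -b (g s)) * g' s) ∧
      ∀ s ∈ E, |a (g s)| + |-b (g s)| ≤ C * K ^ n / s ^ (2 * n) := by
  have hf'0 : ∀ s ∈ E, f' (g s) ≠ 0 := fun s hs => (hf'pos _ (hgD hs)).ne'
  have hf_mono : StrictMonoOn f D :=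
    strictMonoOn_of_hasDerivWithinAt_pos hD (fun z hz => (hf z hz).continuousWithinAt)
      (fun z hz => (hf z (interior_subset hz)).mono interior_subset)
      (fun z hz => hf'pos z (interior_subset hz))
  have : D.OrdConnected := hD.ordConnected
  have hg_cont : ContinuousOn g E := continuousOn_rightInvOn_of_strictMonoOn hf_mono hgD hfg
  have hg_deriv : ∀ s ∈ E, HasDerivWithinAt g (f' (g s))⁻¹ E s := fun s hs =>
    hasDerivWithinAt_rightInvOn (hf _ (hgD hs)) (hf'0 s hs) (hg_cont s hs) hgD hfg hs
  have hf'_cont : ContinuousOn f' D := fun z hz => (hf' z hz).continuousWithinAt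
  refine ⟨fun s => (f' (g s))⁻¹, fun s => -f'' (g s) / f' (g s) ^ 3, hg_deriv,
    fun s hs => hasDerivWithinAt_inv_deriv_comp (hg_deriv s hs) (hf' _ (hgD hs)) (hf'0 s hs) hgD,
    (hf''.comp hg_cont hgD).neg.div ((hf'_cont.comp hg_cont hgD).pow 3)
      fun s hs => pow_ne_zero 3 (hf'0 s hs),
    fun s hs => ?_, fun s hs => ?_⟩
  · have hode_s := hode _ (hgD hs)
    rw [hfg hs] at hode_s
    exact graphical_ode_of_cylindrical_ode (hf'0 s hs) hode_s
  · have hs0 : s ≠ 0 := hfg hs ▸ hf0 _ (hgD hs)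
    have growth : s ^ 2 ≤ K * g s := by simpa only [hfg hs] using hfsq _ (hgD hs)
    rw [abs_neg, pow_mul]
    exact le_mul_pow_div_pow_of_le_div_pow (by positivity) (by positivity) growth (hab _ (hgD hs))

/-- Change of variables: if the radius function `f(z)` of the cylindrical end
satisfies the perturbed rotationally symmetric translator ODE, is increasing,
positive, tends to infinity and satisfies `f(z)² ≤ 8z`, then its inverse `g(s)`
is `C²` and satisfies the perturbed graphical rotationally symmetric translator
equation, with error terms `α(s) = a(g(s))`, `β(s) = −b(g(s))` decaying like `s⁻²⁰`. -/
theorem inverse_function_graphical_translator_ode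
    (z₀ C : ℝ) (hz₀ : 1 < z₀) (hC : 0 < C)
    (f f' f'' a b g : ℝ → ℝ)
    (hf : ∀ z ∈ Ici z₀, HasDerivWithinAt f (f' z) (Ici z₀) z)
    (hf'd : ∀ z ∈ Ici z₀, HasDerivWithinAt f' (f'' z) (Ici z₀) z)
    (hf'' : ContinuousOn f'' (Ici z₀))
    (hf'pos : ∀ z ∈ Ici z₀, 0 < f' z)
    (hfpos : ∀ z ∈ Ici z₀, 0 < f z)
    (hftop : Tendsto f atTop atTop)
    (hfsq : ∀ z ∈ Ici z₀, f z ^ 2 ≤ 8 * z)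
    (ha : Continuous a) (hb : Continuous b)
    (hab : ∀ z ∈ Ici z₀, |a z| + |b z| ≤ C / z ^ 10)
    (hode : ∀ z ∈ Ici z₀,
      -f' z = (1 + a z) * f'' z / (1 + f' z ^ 2) - 1 / f z + b z)
    (hg1 : ∀ z ∈ Ici z₀, g (f z) = z)
    (hg2 : ∀ s ∈ Ici (f z₀), g s ∈ Ici z₀ ∧ f (g s) = s) :
    ∃ g' g'' : ℝ → ℝ,
      (∀ s ∈ Ici (f z₀), HasDerivWithinAt g (g' s) (Ici (f z₀)) s) ∧
      (∀ s ∈ Ici (f z₀), HasDerivWithinAt g' (g'' s) (Ici (f z₀)) s) ∧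
      ContinuousOn g'' (Ici (f z₀)) ∧
      (∀ s ∈ Ici (f z₀),
        1 = (1 + a (g s)) * g'' s / (1 + g' s ^ 2) + (1 / s + -b (g s)) * g' s) ∧
      ∃ C' > (0 : ℝ), ∃ s₁, ∀ s ≥ s₁,
        |a (g s)| + |(-b (g s))| ≤ C' / s ^ 20 := by
  obtain ⟨g', g'', hg, hg', hg'', hgode, hdecay⟩ :=
    inverse_function_graphical_translator_ode_general (convex_Ici z₀) hf hf'd hf'' hf'pos
      (fun z hz => (hfpos z hz).ne') hfsq hab hode (fun s hs => (hg2 s hs).1)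
      (fun s hs => (hg2 s hs).2)
  exact ⟨g', g'', hg, hg', hg'', hgode, C * 8 ^ 10, by positivity, f z₀, hdecay⟩
end

section
/- Let s₀ > 1 and C > 0. Let z : [s₀, ∞) → ℝ be twice continuously differentiable and satisfy 1 = (1 + α(s))·z''(s)/(1 + z'(s)²) + (1/s + β(s))·z'(s) for all s ≥ s₀, where α, β : ℝ → ℝ are continuous with |α(s)| ≤ 1/2 and |α(s)| + |β(s)| ≤ C/s^20 for all s ≥ s₀. Then there exist a constant c ∈ ℝ, a constant C' > 0 and s₁ ≥ s₀ such that |z(s) − (c + s²/2 − log s)| ≤ C'/s for all s ≥ s₁. -/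
open Set Filter

/-!
The slope `w = z'` solves `(1 + α) w' = (1 + w²) (1 - (k / s + β) w)`, with `k = 1` in the theorem.
In terms of the tangent angle this reads `(1 + α) (arctan w)' = 1 - (k / s + β) w`, so the angle
grows at a definite rate while `w ≤ c s / k` with `c < 1`; hence eventually `w ≥ 3 s / (4 k)`. In
that region the right-hand side of the slope equation is decreasing in `w`. The curves
`U = s / k - 1 / s + K / s²` satisfy
`(1 + α) U' - (1 + U²) (1 - (k / s + β) U) = (K / k + s α / k + s⁴ β / k³ + o(1)) / s`,
so for large `K` the curves with parameters `K` and `-K` are an upper and a lower barrier. Since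
`1 / s` is not integrable at infinity, `w` is driven between them, so `w = s / k - 1 / s + O(s⁻²)`,
and this integrates to the expansion of `z`.
-/

open Asymptotics Topology

lemma frequently_nonneg_of_deriv_le {h h' φ φ' : ℝ → ℝ}
    (hh : ∀ᶠ s in atTop, HasDerivAt h (h' s) s) (hφ : ∀ᶠ s in atTop, HasDerivAt φ (φ' s) s)
    (hφ_top : Tendsto φ atTop atTop) (hle : ∀ᶠ s in atTop, h s ≤ 0 → φ' s ≤ h' s) :
    ∃ᶠ s in atTop, 0 ≤ h s := by
  by_contra hneg
  obtain ⟨a, ha⟩ := eventually_atTop.1 (hh.and (hφ.and (hle.and (not_frequently.1 hneg))))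
  have hderiv (s : ℝ) (hs : s ∈ Ici a) : HasDerivAt (h - φ) (h' s - φ' s) s :=
    (ha s hs).1.sub (ha s hs).2.1
  have hmono : MonotoneOn (h - φ) (Ici a) := by
    refine monotoneOn_of_hasDerivWithinAt_nonneg (convex_Ici a)
      (fun s hs ↦ (hderiv s hs).continuousAt.continuousWithinAt)
      (fun s hs ↦ (hderiv s (interior_subset hs)).hasDerivWithinAt) fun s hs ↦ ?_
    obtain ⟨-, -, hgap, hs_neg⟩ := ha s (interior_subset hs)
    exact sub_nonneg.2 (hgap (not_le.1 hs_neg).le)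
  obtain ⟨s, hs_large, has⟩ :=
    ((hφ_top.eventually_ge_atTop (φ a - h a)).and (eventually_ge_atTop a)).exists
  have hs_mono : h a - φ a ≤ h s - φ s := hmono self_mem_Ici has has
  have hs_neg : h s < 0 := not_le.1 (ha s has).2.2.2
  linarith

lemma nonneg_of_deriv_pos_of_eq_zero {h h' : ℝ → ℝ} {a s : ℝ}
    (hh : ∀ t ≥ a, HasDerivAt h (h' t) t) (hpos : ∀ t ≥ a, h t = 0 → 0 < h' t)
    (ha : 0 ≤ h a) (has : a ≤ s) : 0 ≤ h s := by
  refine neg_nonpos.1 <| image_le_of_deriv_right_lt_deriv_boundary'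
    (f := fun t ↦ -h t) (f' := fun t ↦ -h' t) (B := fun _ ↦ 0) (B' := fun _ ↦ 0)
    (fun t ht ↦ (hh t ht.1).neg.continuousAt.continuousWithinAt)
    (fun t ht ↦ (hh t ht.1).neg.hasDerivWithinAt) (neg_nonpos.2 ha) continuousOn_const
    (fun t _ ↦ hasDerivWithinAt_const ..)
    (fun t ht hzero ↦ neg_neg_iff_pos.2 (hpos t ht.1 (neg_eq_zero.1 hzero))) (right_mem_Icc.2 has)

lemma eventually_nonneg_of_deriv_le {h h' φ φ' : ℝ → ℝ}
    (hh : ∀ᶠ s in atTop, HasDerivAt h (h' s) s) (hφ : ∀ᶠ s in atTop, HasDerivAt φ (φ' s) s)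
    (hφ_pos : ∀ᶠ s in atTop, 0 < φ' s) (hφ_top : Tendsto φ atTop atTop)
    (hle : ∀ᶠ s in atTop, h s ≤ 0 → φ' s ≤ h' s) : ∀ᶠ s in atTop, 0 ≤ h s := by
  obtain ⟨a, ha⟩ := eventually_atTop.1 (hh.and (hφ_pos.and hle))
  obtain ⟨b, hb, hab⟩ := ((frequently_nonneg_of_deriv_le hh hφ hφ_top hle).and_eventually
    (eventually_ge_atTop a)).exists
  filter_upwards [eventually_ge_atTop b] with s hbs
  refine nonneg_of_deriv_pos_of_eq_zero (fun t ht ↦ (ha t (hab.trans ht)).1)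
    (fun t ht hzero ↦ ?_) hb hbs
  obtain ⟨-, hpos, hgap⟩ := ha t (hab.trans ht)
  exact hpos.trans_le (hgap hzero.le)

lemma eventually_nonneg_of_inv_le_deriv {h h' : ℝ → ℝ}
    (hh : ∀ᶠ s in atTop, HasDerivAt h (h' s) s) (hle : ∀ᶠ s in atTop, h s ≤ 0 → s⁻¹ ≤ h' s) :
    ∀ᶠ s in atTop, 0 ≤ h s :=
  eventually_nonneg_of_deriv_le hh
    ((eventually_ne_atTop 0).mono fun _ ↦ Real.hasDerivAt_log)
    ((eventually_gt_atTop 0).mono fun _ ↦ inv_pos.2) Real.tendsto_log_atTop hle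

section Integration

variable {E : Type*} [NormedAddCommGroup E] [NormedSpace ℝ E] {f f' : ℝ → E}

lemma norm_sub_le_sub_of_norm_deriv_le_neg {g g' : ℝ → ℝ} {s t : ℝ}
    (hf : ∀ u ≥ s, HasDerivAt f (f' u) u) (hg : ∀ u ≥ s, HasDerivAt g (g' u) u)
    (hle : ∀ u ≥ s, ‖f' u‖ ≤ -g' u) (hst : s ≤ t) : ‖f t - f s‖ ≤ g s - g t :=
  image_norm_le_of_norm_deriv_right_le_deriv_boundary' (f := fun u ↦ f u - f s)
    (B := fun u ↦ g s - g u) (B' := fun u ↦ -g' u)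
    (fun u hu ↦ ((hf u hu.1).sub_const _).continuousAt.continuousWithinAt)
    (fun u hu ↦ ((hf u hu.1).sub_const _).hasDerivWithinAt) (by simp)
    (fun u hu ↦ ((hg u hu.1).const_sub _).continuousAt.continuousWithinAt)
    (fun u hu ↦ ((hg u hu.1).const_sub _).hasDerivWithinAt)
    (fun u hu ↦ hle u hu.1) (right_mem_Icc.2 hst)

lemma exists_eventually_norm_sub_le_of_norm_deriv_le_neg [CompleteSpace E] {g g' : ℝ → ℝ}
    (hf : ∀ᶠ s in atTop, HasDerivAt f (f' s) s) (hg : ∀ᶠ s in atTop, HasDerivAt g (g' s) s)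
    (hle : ∀ᶠ s in atTop, ‖f' s‖ ≤ -g' s) (hg_lim : Tendsto g atTop (𝓝 0)) :
    ∃ c, ∀ᶠ s in atTop, ‖f s - c‖ ≤ g s := by
  obtain ⟨a, ha⟩ := eventually_atTop.1 (hf.and (hg.and hle))
  have hincr {s t : ℝ} (has : a ≤ s) (hst : s ≤ t) : ‖f t - f s‖ ≤ g s - g t :=
    norm_sub_le_sub_of_norm_deriv_le_neg (fun u hu ↦ (ha u (has.trans hu)).1)
      (fun u hu ↦ (ha u (has.trans hu)).2.1) (fun u hu ↦ (ha u (has.trans hu)).2.2) hst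
  have hcauchy : CauchySeq f := by
    refine Metric.cauchySeq_iff'.2 fun ε hε ↦ ?_
    obtain ⟨N, hN⟩ := eventually_atTop.1 (hg_lim.eventually (Metric.ball_mem_nhds 0 (half_pos hε)))
    have hg_small {s : ℝ} (hs : N ≤ s) : |g s| < ε / 2 := by simpa using hN s hs
    refine ⟨max a N, fun s hs ↦ ?_⟩
    rw [dist_eq_norm]
    linarith [hincr (le_max_left a N) hs, abs_lt.1 (hg_small (le_max_right a N)),
      abs_lt.1 (hg_small (le_of_max_le_right hs))]
  obtain ⟨c, hc⟩ := cauchySeq_tendsto_of_complete hcauchy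
  refine ⟨c, (eventually_ge_atTop a).mono fun s has ↦ ?_⟩
  have hlim : Tendsto (fun t ↦ ‖f t - f s‖) atTop (𝓝 ‖c - f s‖) := (hc.sub_const _).norm
  rw [norm_sub_rev]
  refine le_of_tendsto_of_tendsto hlim (by simpa using hg_lim.const_sub (g s)) ?_
  exact (eventually_ge_atTop s).mono fun t hst ↦ hincr has hst

lemma hasDerivAt_inv_pow {n : ℕ} {s : ℝ} (hs : s ≠ 0) :
    HasDerivAt (fun s : ℝ ↦ s⁻¹ ^ n) (-n * s⁻¹ ^ (n + 1)) s := by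
  refine ((hasDerivAt_inv hs).pow n).congr_deriv ?_
  rcases n with _ | n
  · simp
  · push_cast [Nat.add_sub_cancel]
    ring

lemma exists_isBigO_sub_const_of_deriv_isBigO [CompleteSpace E] {n : ℕ} (hn : n ≠ 0)
    (hf : ∀ᶠ s in atTop, HasDerivAt f (f' s) s) (hf' : f' =O[atTop] fun s : ℝ ↦ s⁻¹ ^ (n + 1)) :
    ∃ c, (fun s ↦ f s - c) =O[atTop] fun s : ℝ ↦ s⁻¹ ^ n := by
  obtain ⟨C, hC⟩ := hf'.bound
  have hlim : Tendsto (fun s : ℝ ↦ C / n * s⁻¹ ^ n) atTop (𝓝 0) := by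
    simpa [hn] using (tendsto_inv_atTop_zero.pow n).const_mul (C / n)
  have hbound : ∀ᶠ s in atTop, ‖f' s‖ ≤ -(C / n * (-n * s⁻¹ ^ (n + 1))) := by
    filter_upwards [hC, eventually_gt_atTop 0] with s hs hpos
    rw [Real.norm_of_nonneg (by positivity)] at hs
    exact hs.trans_eq (by field_simp)
  obtain ⟨c, hc⟩ := exists_eventually_norm_sub_le_of_norm_deriv_le_neg hf
    ((eventually_ne_atTop 0).mono fun s hs ↦ (hasDerivAt_inv_pow hs).const_mul (C / n)) hbound hlim
  refine ⟨c, .of_bound (C / n) ?_⟩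
  filter_upwards [hc, eventually_gt_atTop 0] with s hs hpos
  rwa [Real.norm_of_nonneg (by positivity)]

end Integration

lemma tendsto_sub_of_continuous_of_eventually_mem_isCompact {ι X Y : Type*} [TopologicalSpace X]
    [TopologicalSpace Y] {F : X → Y → ℝ} (hF : Continuous (Function.uncurry F)) {l : Filter ι}
    {x : ι → X} {x₀ : X} (hx : Tendsto x l (𝓝 x₀)) {y : ι → Y} {S : Set Y} (hS : IsCompact S)
    (hy : ∀ᶠ i in l, y i ∈ S) : Tendsto (fun i ↦ F (x i) (y i) - F x₀ (y i)) l (𝓝 0) := by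
  refine Metric.tendsto_nhds.2 fun ε hε ↦ ?_
  have huniform : ∀ᶠ x in 𝓝 x₀, ∀ y ∈ S, dist (F x y - F x₀ y) 0 < ε := by
    refine hS.eventually_forall_of_forall_eventually fun y _ ↦ ?_
    have hcont : Continuous fun p : X × Y ↦ dist (F p.1 p.2 - F x₀ p.2) 0 :=
      (hF.sub (hF.comp (continuous_const.prodMk continuous_snd))).dist continuous_const
    exact hcont.continuousAt.eventually_lt continuousAt_const (by simpa using hε)
  filter_upwards [hx.eventually huniform, hy] with i hi hyi using hi _ hyi

lemma isBigO_inv_pow_of_abs_le_div_pow {f : ℝ → ℝ} {C : ℝ} {m n : ℕ} (hmn : m ≤ n)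
    (hf : ∀ᶠ s in atTop, |f s| ≤ C / s ^ n) : f =O[atTop] fun s ↦ s⁻¹ ^ m := by
  refine .of_bound |C| ?_
  filter_upwards [hf, eventually_ge_atTop 1] with s hfs hs
  have : 0 < s := by linarith
  rw [Real.norm_eq_abs, Real.norm_of_nonneg (by positivity)]
  calc |f s| ≤ C / s ^ n := hfs
    _ ≤ |C| * s⁻¹ ^ n := by rw [div_eq_mul_inv, inv_pow]; gcongr; exact le_abs_self C
    _ ≤ |C| * s⁻¹ ^ m := mul_le_mul_of_nonneg_left
      (pow_le_pow_of_le_one (by positivity) (inv_le_one_of_one_le₀ hs) hmn) (abs_nonneg C)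

lemma exists_eventually_abs_pow_mul_le {f : ℝ → ℝ} {n : ℕ}
    (hf : f =O[atTop] fun s ↦ s⁻¹ ^ n) : ∃ A, ∀ᶠ s in atTop, |s ^ n * f s| ≤ A := by
  obtain ⟨A, hA⟩ := hf.bound
  refine ⟨A, ?_⟩
  filter_upwards [hA, eventually_gt_atTop 0] with s hs hpos
  rw [Real.norm_eq_abs, Real.norm_of_nonneg (by positivity), inv_pow] at hs
  rwa [abs_mul, abs_of_pos (pow_pos hpos n), mul_comm, ← le_div_iff₀ (pow_pos hpos n)]

lemma tendsto_pow_mul_zero_of_isBigO {f : ℝ → ℝ} {m n : ℕ} (hmn : m < n)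
    (hf : f =O[atTop] fun s ↦ s⁻¹ ^ n) : Tendsto (fun s ↦ s ^ m * f s) atTop (𝓝 0) := by
  refine ((isBigO_refl (fun s : ℝ ↦ s ^ m) atTop).mul hf).trans_tendsto ?_
  have hlim : Tendsto (fun s : ℝ ↦ s⁻¹ ^ (n - m)) atTop (𝓝 0) := by
    simpa [Nat.sub_ne_zero_of_lt hmn] using (tendsto_inv_atTop_zero (𝕜 := ℝ)).pow (n - m)
  refine hlim.congr' ((eventually_ne_atTop 0).mono fun s hs ↦ ?_)
  simp only [inv_pow, pow_sub₀ s hs hmn.le, mul_inv, inv_inv, mul_comm]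

lemma eventually_hasDerivAt_of_hasDerivWithinAt_Ici {E : Type*} [NormedAddCommGroup E]
    [NormedSpace ℝ E] {f f' : ℝ → E} {a : ℝ}
    (hf : ∀ s ∈ Ici a, HasDerivWithinAt f (f' s) (Ici a) s) :
    ∀ᶠ s in atTop, HasDerivAt f (f' s) s :=
  (eventually_gt_atTop a).mono fun s hs ↦ (hf s hs.le).hasDerivAt (Ici_mem_nhds hs)

/-- The right-hand side of the equation `(1 + α) w' = (1 + w²) (1 - b w)` for the slope `w = z'` of
a rotationally symmetric translating graph, where `b = k / s + β`. -/
def slopeField (b w : ℝ) : ℝ :=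
  (1 + w ^ 2) * (1 - b * w)

lemma slopeField_le_slopeField {b x y : ℝ} (hb : 0 < b) (hx : 2 / 3 ≤ b * x) (hxy : x ≤ y) :
    slopeField b y ≤ slopeField b x := by
  have hby : 2 / 3 ≤ b * y := hx.trans (by gcongr)
  have hx_pos : 0 < x := pos_of_mul_pos_right (by linarith) hb.le
  have hy_pos : 0 < y := hx_pos.trans_le hxy
  have hslope : x + y ≤ b * (x ^ 2 + x * y + y ^ 2) := by
    linarith [mul_le_mul_of_nonneg_right hx hx_pos.le, mul_le_mul_of_nonneg_right hx hy_pos.le,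
      mul_le_mul_of_nonneg_right hby hx_pos.le, mul_le_mul_of_nonneg_right hby hy_pos.le]
  have hfactor : slopeField b x - slopeField b y =
      (y - x) * (b * (x ^ 2 + x * y + y ^ 2) - (x + y) + b) := by
    unfold slopeField; ring
  rw [← sub_nonneg, hfactor]
  exact mul_nonneg (sub_nonneg.2 hxy) (by linarith)

/-- The curve `s ↦ s / k - 1 / s + K / s²`: the expected slope together with a correction of the
order of the error term. For large `K` it is an upper barrier for the slope, for large `-K` a lower
barrier. -/
noncomputable def bowlBarrier (k K s : ℝ) : ℝ :=
  s / k - s⁻¹ + K * s⁻¹ ^ 2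

/-- The derivative of `bowlBarrier k K`. -/
noncomputable def bowlBarrierDeriv (k K s : ℝ) : ℝ :=
  1 / k + s⁻¹ ^ 2 - 2 * K * s⁻¹ ^ 3

/-- The amount by which `bowlBarrier k K` fails to solve the slope equation, divided by `x = 1 / s`
and written as a polynomial in `x` and `p = (s α, s⁴ β)`, so that it makes sense at `x = 0`; the
auxiliary `y` is `x * bowlBarrier k K s`. -/
noncomputable def barrierDefect (k K x : ℝ) (p : ℝ × ℝ) : ℝ :=
  let y := 1 / k - x ^ 2 + K * x ^ 3
  (x ^ 2 + y ^ 2) * (k * K + p.2 * y) + p.1 * (1 / k + x ^ 2 - 2 * K * x ^ 3)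
    + x - k * x - 2 * K * x ^ 2 - k * x * (K * x - 1) * (y + 1 / k)

section Barrier

variable {k K A B : ℝ} {α β : ℝ → ℝ}

lemma hasDerivAt_bowlBarrier {s : ℝ} (hs : s ≠ 0) :
    HasDerivAt (bowlBarrier k K) (bowlBarrierDeriv k K s) s := by
  refine ((((hasDerivAt_id s).div_const k).sub (hasDerivAt_inv hs)).add
    (((hasDerivAt_inv hs).pow 2).const_mul K)).congr_deriv ?_
  simp only [bowlBarrierDeriv, Nat.cast_ofNat, Nat.add_one_sub_one, pow_one]
  ring

lemma mul_bowlBarrierDeriv_sub_slopeField (hk : k ≠ 0) {s : ℝ} (hs : s ≠ 0) (a b : ℝ) :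
    (1 + a) * bowlBarrierDeriv k K s - slopeField (k / s + b) (bowlBarrier k K s) =
      s⁻¹ * barrierDefect k K s⁻¹ (s * a, s ^ 4 * b) := by
  simp only [bowlBarrierDeriv, slopeField, bowlBarrier, barrierDefect]
  field_simp
  ring

lemma barrierDefect_zero (hk : k ≠ 0) (p : ℝ × ℝ) :
    barrierDefect k K 0 p = K / k + p.1 / k + p.2 / k ^ 3 := by
  simp only [barrierDefect]
  field_simp
  ring

lemma continuous_barrierDefect : Continuous (Function.uncurry (barrierDefect k K)) := by
  unfold barrierDefect Function.uncurry
  fun_prop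

lemma tendsto_barrierDefect_sub (hα : ∀ᶠ s in atTop, |s * α s| ≤ A)
    (hβ : ∀ᶠ s in atTop, |s ^ 4 * β s| ≤ B) :
    Tendsto (fun s ↦ barrierDefect k K s⁻¹ (s * α s, s ^ 4 * β s) -
      barrierDefect k K 0 (s * α s, s ^ 4 * β s)) atTop (𝓝 0) :=
  tendsto_sub_of_continuous_of_eventually_mem_isCompact continuous_barrierDefect
    tendsto_inv_atTop_zero
    ((isCompact_Icc (a := -A) (b := A)).prod (isCompact_Icc (a := -B) (b := B)))
    ((hα.and hβ).mono fun _ h ↦ ⟨abs_le.1 h.1, abs_le.1 h.2⟩)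

lemma eventually_two_le_barrierDefect (hk : 0 < k) (hα : ∀ᶠ s in atTop, |s * α s| ≤ A)
    (hβ : ∀ᶠ s in atTop, |s ^ 4 * β s| ≤ B) (hK : 3 ≤ K / k - A / k - B / k ^ 3) :
    ∀ᶠ s in atTop, 2 ≤ barrierDefect k K s⁻¹ (s * α s, s ^ 4 * β s) := by
  filter_upwards [hα, hβ,
    (tendsto_barrierDefect_sub (K := K) hα hβ).eventually_const_lt neg_one_lt_zero]
    with s hαs hβs hclose
  have ha : -A / k ≤ s * α s / k := by gcongr; exact (abs_le.1 hαs).1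
  have he : -B / k ^ 3 ≤ s ^ 4 * β s / k ^ 3 := by gcongr; exact (abs_le.1 hβs).1
  rw [barrierDefect_zero hk.ne'] at hclose
  rw [neg_div] at ha he
  linarith

lemma eventually_barrierDefect_neg_le_neg_two (hk : 0 < k) (hα : ∀ᶠ s in atTop, |s * α s| ≤ A)
    (hβ : ∀ᶠ s in atTop, |s ^ 4 * β s| ≤ B) (hK : 3 ≤ K / k - A / k - B / k ^ 3) :
    ∀ᶠ s in atTop, barrierDefect k (-K) s⁻¹ (s * α s, s ^ 4 * β s) ≤ -2 := by
  filter_upwards [hα, hβ,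
    (tendsto_barrierDefect_sub (K := -K) hα hβ).eventually_lt_const one_pos] with s hαs hβs hclose
  have ha : s * α s / k ≤ A / k := by gcongr; exact (abs_le.1 hαs).2
  have he : s ^ 4 * β s / k ^ 3 ≤ B / k ^ 3 := by gcongr; exact (abs_le.1 hβs).2
  rw [barrierDefect_zero hk.ne', neg_div] at hclose
  linarith

lemma eventually_mul_div_le_bowlBarrier (hk : 0 < k) {c : ℝ} (hc : c < 1) :
    ∀ᶠ s in atTop, c * (s / k) ≤ bowlBarrier k K s := by
  have hlinear : Tendsto (fun s ↦ (1 - c) / k * s) atTop atTop :=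
    tendsto_id.const_mul_atTop (div_pos (sub_pos.2 hc) hk)
  have hsmall : Tendsto (fun s : ℝ ↦ -s⁻¹ + K * s⁻¹ ^ 2) atTop (𝓝 0) := by
    simpa using tendsto_inv_atTop_zero.neg.add ((tendsto_inv_atTop_zero.pow 2).const_mul K)
  filter_upwards [(hlinear.atTop_add hsmall).eventually_ge_atTop 0] with s hs
  rw [← sub_nonneg]
  exact hs.trans_eq (by rw [bowlBarrier]; ring)

lemma eventually_div_add_pos (hk : 0 < k) (hβ : Tendsto (fun s ↦ s * β s) atTop (𝓝 0)) :
    ∀ᶠ s in atTop, 0 < k / s + β s := by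
  filter_upwards [hβ.eventually_const_lt (neg_neg_of_pos hk), eventually_gt_atTop 0] with s hβs hs
  have hfactor : k / s + β s = (k + s * β s) / s := by field_simp
  rw [hfactor]
  exact div_pos (by linarith) hs

lemma eventually_two_thirds_le_mul (hk : 0 < k) (hβ : Tendsto (fun s ↦ s * β s) atTop (𝓝 0))
    {w : ℝ → ℝ} (hw : ∀ᶠ s in atTop, 3 / 4 * (s / k) ≤ w s) :
    ∀ᶠ s in atTop, 2 / 3 ≤ (k / s + β s) * w s := by
  filter_upwards [eventually_div_add_pos hk hβ, eventually_gt_atTop 0, hw,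
    hβ.eventually_const_le (by linarith : -(k / 9) < 0)] with s hb hs hws hβs
  calc 2 / 3 = 3 / 4 * ((k - k / 9) / k) := by field_simp; norm_num
    _ ≤ 3 / 4 * ((k + s * β s) / k) := by gcongr; linarith
    _ = (k / s + β s) * (3 / 4 * (s / k)) := by field_simp
    _ ≤ (k / s + β s) * w s := by gcongr

lemma tendsto_deriv_arctan_sub (hk : 0 < k) (hα : Tendsto α atTop (𝓝 0))
    (hβ : Tendsto (fun s ↦ s * β s) atTop (𝓝 0)) {c : ℝ} (hc : 0 < c) :
    Tendsto (fun s ↦ (1 - (k / s + β s) * (c * (s / k))) / (1 + α s) -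
      1 / (1 + (c * (s / k)) ^ 2) * (c * (1 / k))) atTop (𝓝 (1 - c)) := by
  have hline : Tendsto (fun s ↦ c * (s / k)) atTop atTop :=
    (tendsto_id.atTop_div_const hk).const_mul_atTop hc
  have hline_deriv : Tendsto (fun s ↦ 1 / (1 + (c * (s / k)) ^ 2) * (c * (1 / k))) atTop (𝓝 0) := by
    have hsq := tendsto_atTop_add_const_left atTop 1 ((tendsto_pow_atTop two_ne_zero).comp hline)
    simpa using hsq.inv_tendsto_atTop.mul_const (c * (1 / k))
  have hproduct : Tendsto (fun s ↦ (k / s + β s) * (c * (s / k))) atTop (𝓝 c) := by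
    have hlim : Tendsto (fun s ↦ c * (1 + s * β s / k)) atTop (𝓝 c) := by
      simpa using ((hβ.div_const k).const_add 1).const_mul c
    refine hlim.congr' ((eventually_ne_atTop 0).mono fun s hs ↦ ?_)
    field_simp
  simpa using ((hproduct.const_sub 1).div (hα.const_add 1) (by norm_num)).sub hline_deriv

end Barrier

/-- `w`, with derivative `w'`, is for large `s` the slope of a rotationally symmetric translating
graph whose equation is perturbed by `α` and `β`; a graph over `ℝⁿ` has `k = n - 1`. -/
structure IsTranslatorSlope (k : ℝ) (w w' α β : ℝ → ℝ) : Prop where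
  hasDerivAt : ∀ᶠ s in atTop, HasDerivAt w (w' s) s
  equation : ∀ᶠ s in atTop, (1 + α s) * w' s = slopeField (k / s + β s) (w s)

namespace IsTranslatorSlope

variable {k K : ℝ} {w w' α β : ℝ → ℝ}

lemma hasDerivAt_arctan (hw : IsTranslatorSlope k w w' α β) (hα : Tendsto α atTop (𝓝 0)) :
    ∀ᶠ s in atTop, HasDerivAt (fun s ↦ Real.arctan (w s))
      ((1 - (k / s + β s) * w s) / (1 + α s)) s := by
  filter_upwards [hw.hasDerivAt, hw.equation, hα.eventually_const_lt neg_one_lt_zero]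
    with s hderiv heq hαs
  have hα_pos : 0 < 1 + α s := by linarith
  refine hderiv.arctan.congr_deriv ?_
  rw [slopeField] at heq
  field_simp
  linarith

lemma eventually_mul_div_le (hw : IsTranslatorSlope k w w' α β) (hk : 0 < k)
    (hα : Tendsto α atTop (𝓝 0)) (hβ : Tendsto (fun s ↦ s * β s) atTop (𝓝 0)) {c : ℝ}
    (hc₀ : 0 < c) (hc₁ : c < 1) : ∀ᶠ s in atTop, c * (s / k) ≤ w s := by
  have hhalf : 0 < (1 - c) / 2 := by linarith
  have hangle : ∀ᶠ s in atTop, 0 ≤ Real.arctan (w s) - Real.arctan (c * (s / k)) := by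
    refine eventually_nonneg_of_deriv_le (φ := fun s ↦ (1 - c) / 2 * s) (φ' := fun _ ↦ (1 - c) / 2)
      ((hw.hasDerivAt_arctan hα).mono fun s hs ↦
        hs.sub (((hasDerivAt_id' s).div_const k).const_mul c).arctan)
      (.of_forall fun _ ↦ hasDerivAt_const_mul _) (.of_forall fun _ ↦ hhalf)
      (tendsto_id.const_mul_atTop hhalf) ?_
    filter_upwards [hα.eventually_const_lt neg_one_lt_zero, eventually_div_add_pos hk hβ,
      (tendsto_deriv_arctan_sub hk hα hβ hc₀).eventually_const_le
        (by linarith : (1 - c) / 2 < 1 - c)] with s hαs hb hrate hle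
    have hws : w s ≤ c * (s / k) := Real.arctan_le_arctan_iff.1 (sub_nonpos.1 hle)
    have hα_pos : 0 ≤ 1 + α s := by linarith
    exact hrate.trans (by gcongr)
  exact hangle.mono fun s hs ↦ Real.arctan_le_arctan_iff.1 (sub_nonneg.1 hs)

lemma eventually_le_bowlBarrier (hw : IsTranslatorSlope k w w' α β) (hk : 0 < k)
    (hα : Tendsto α atTop (𝓝 0)) (hβ : Tendsto (fun s ↦ s * β s) atTop (𝓝 0))
    (hdefect : ∀ᶠ s in atTop, 2 ≤ barrierDefect k K s⁻¹ (s * α s, s ^ 4 * β s)) :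
    ∀ᶠ s in atTop, w s ≤ bowlBarrier k K s := by
  have hnonneg : ∀ᶠ s in atTop, 0 ≤ bowlBarrier k K s - w s := by
    refine eventually_nonneg_of_inv_le_deriv
      (h' := fun s ↦ bowlBarrierDeriv k K s - w' s) ?_ ?_
    · filter_upwards [hw.hasDerivAt, eventually_ne_atTop 0] with s hws hs
      exact (hasDerivAt_bowlBarrier hs).sub hws
    filter_upwards [hw.equation, hdefect, eventually_gt_atTop 0, hα.eventually_lt_const one_pos,
      hα.eventually_const_lt neg_one_lt_zero, eventually_div_add_pos hk hβ,
      eventually_two_thirds_le_mul hk hβ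
        (eventually_mul_div_le_bowlBarrier (K := K) hk (by norm_num))]
      with s heq hdefect hs hα_lt hα_gt hb hbU hle
    have hfield := slopeField_le_slopeField hb hbU (sub_nonpos.1 hle)
    have hresidual := mul_bowlBarrierDeriv_sub_slopeField (K := K) hk.ne' hs.ne' (α s) (β s)
    refine le_of_mul_le_mul_left ?_ (by linarith : 0 < 1 + α s)
    calc (1 + α s) * s⁻¹ ≤ 2 * s⁻¹ := by gcongr; linarith
      _ ≤ s⁻¹ * barrierDefect k K s⁻¹ (s * α s, s ^ 4 * β s) := by rw [mul_comm]; gcongr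
      _ ≤ (1 + α s) * (bowlBarrierDeriv k K s - w' s) := by linarith
  exact hnonneg.mono fun _ ↦ sub_nonneg.1

lemma eventually_bowlBarrier_le (hw : IsTranslatorSlope k w w' α β) (hk : 0 < k)
    (hα : Tendsto α atTop (𝓝 0)) (hβ : Tendsto (fun s ↦ s * β s) atTop (𝓝 0))
    (hdefect : ∀ᶠ s in atTop, barrierDefect k K s⁻¹ (s * α s, s ^ 4 * β s) ≤ -2) :
    ∀ᶠ s in atTop, bowlBarrier k K s ≤ w s := by
  have hnonneg : ∀ᶠ s in atTop, 0 ≤ w s - bowlBarrier k K s := by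
    refine eventually_nonneg_of_inv_le_deriv
      (h' := fun s ↦ w' s - bowlBarrierDeriv k K s) ?_ ?_
    · filter_upwards [hw.hasDerivAt, eventually_ne_atTop 0] with s hws hs
      exact hws.sub (hasDerivAt_bowlBarrier hs)
    filter_upwards [hw.equation, hdefect, eventually_gt_atTop 0, hα.eventually_lt_const one_pos,
      hα.eventually_const_lt neg_one_lt_zero, eventually_div_add_pos hk hβ,
      eventually_two_thirds_le_mul hk hβ
        (hw.eventually_mul_div_le hk hα hβ (by norm_num) (by norm_num))]
      with s heq hdefect hs hα_lt hα_gt hb hbw hle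
    have hfield := slopeField_le_slopeField hb hbw (sub_nonpos.1 hle)
    have hresidual := mul_bowlBarrierDeriv_sub_slopeField (K := K) hk.ne' hs.ne' (α s) (β s)
    refine le_of_mul_le_mul_left ?_ (by linarith : 0 < 1 + α s)
    calc (1 + α s) * s⁻¹ ≤ 2 * s⁻¹ := by gcongr; linarith
      _ ≤ s⁻¹ * -barrierDefect k K s⁻¹ (s * α s, s ^ 4 * β s) := by
        rw [mul_comm]; gcongr; linarith
      _ ≤ (1 + α s) * (w' s - bowlBarrierDeriv k K s) := by linarith
  exact hnonneg.mono fun _ ↦ sub_nonneg.1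

lemma isBigO_sub (hw : IsTranslatorSlope k w w' α β) (hk : 0 < k)
    (hα : α =O[atTop] fun s ↦ s⁻¹) (hβ : β =O[atTop] fun s ↦ s⁻¹ ^ 4) :
    (fun s ↦ w s - (s / k - s⁻¹)) =O[atTop] fun s ↦ s⁻¹ ^ 2 := by
  obtain ⟨A, hA⟩ := exists_eventually_abs_pow_mul_le (n := 1) (by simpa using hα)
  obtain ⟨B, hB⟩ := exists_eventually_abs_pow_mul_le hβ
  simp only [pow_one] at hA
  have hα_lim : Tendsto α atTop (𝓝 0) := hα.trans_tendsto tendsto_inv_atTop_zero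
  have hβ_lim : Tendsto (fun s ↦ s * β s) atTop (𝓝 0) := by
    simpa using tendsto_pow_mul_zero_of_isBigO (by norm_num : 1 < 4) hβ
  obtain ⟨K, hK⟩ : ∃ K, 3 ≤ K / k - A / k - B / k ^ 3 :=
    ⟨3 * k + A + B / k ^ 2, by field_simp; linarith⟩
  refine .of_bound K ?_
  filter_upwards [
    hw.eventually_le_bowlBarrier hk hα_lim hβ_lim (eventually_two_le_barrierDefect hk hA hB hK),
    hw.eventually_bowlBarrier_le hk hα_lim hβ_lim
      (eventually_barrierDefect_neg_le_neg_two hk hA hB hK)] with s hupper hlower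
  rw [bowlBarrier] at hupper hlower
  rw [Real.norm_eq_abs, Real.norm_of_nonneg (by positivity), abs_le]
  constructor <;> linarith

end IsTranslatorSlope

lemma isTranslatorSlope_of_translator_equation {k : ℝ} {w w' α β : ℝ → ℝ}
    (hw : ∀ᶠ s in atTop, HasDerivAt w (w' s) s)
    (heq : ∀ᶠ s in atTop,
      1 = (1 + α s) * w' s / (1 + w s ^ 2) + (k / s + β s) * w s) :
    IsTranslatorSlope k w w' α β where
  hasDerivAt := hw
  equation := heq.mono fun s hs ↦ by
    have hpos : (1 + w s ^ 2) ≠ 0 := by positivity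
    rw [slopeField, mul_comm (1 + w s ^ 2), ← div_eq_iff hpos]
    linarith

theorem graphical_translator_bowl_asymptotics_general {k : ℝ} (hk : 0 < k)
    {z z' z'' α β : ℝ → ℝ} (hz : ∀ᶠ s in atTop, HasDerivAt z (z' s) s)
    (hz' : ∀ᶠ s in atTop, HasDerivAt z' (z'' s) s)
    (hα : α =O[atTop] fun s ↦ s⁻¹) (hβ : β =O[atTop] fun s ↦ s⁻¹ ^ 4)
    (heq : ∀ᶠ s in atTop,
      1 = (1 + α s) * z'' s / (1 + z' s ^ 2) + (k / s + β s) * z' s) :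
    ∃ c, (fun s ↦ z s - (c + s ^ 2 / (2 * k) - Real.log s)) =O[atTop] fun s ↦ s⁻¹ := by
  have hslope := (isTranslatorSlope_of_translator_equation hz' heq).isBigO_sub hk hα hβ
  have hderiv : ∀ᶠ s in atTop, HasDerivAt (fun s ↦ z s - (s ^ 2 / (2 * k) - Real.log s))
      (z' s - (s / k - s⁻¹)) s := by
    filter_upwards [hz, eventually_ne_atTop 0] with s hzs hs
    refine hzs.sub ((((hasDerivAt_pow 2 s).div_const (2 * k)).sub
      (Real.hasDerivAt_log hs)).congr_deriv ?_)
    field_simp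
    norm_num
    ring
  obtain ⟨c, hc⟩ := exists_isBigO_sub_const_of_deriv_isBigO one_ne_zero hderiv hslope
  exact ⟨c, hc.congr (fun s ↦ by ring) fun s ↦ pow_one _⟩

/-- Any global solution of the perturbed graphical rotationally symmetric translator
equation has the bowl soliton asymptotics `z(s) = c + s²/2 − log s + O(1/s)`. -/
theorem graphical_translator_bowl_asymptotics
    (s₀ C : ℝ) (hs₀ : 1 < s₀) (hC : 0 < C)
    (z z' z'' α β : ℝ → ℝ)
    (hz : ∀ s ∈ Ici s₀, HasDerivWithinAt z (z' s) (Ici s₀) s)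
    (hz' : ∀ s ∈ Ici s₀, HasDerivWithinAt z' (z'' s) (Ici s₀) s)
    (hz'' : ContinuousOn z'' (Ici s₀))
    (hα : Continuous α) (hβ : Continuous β)
    (hαhalf : ∀ s ∈ Ici s₀, |α s| ≤ 1 / 2)
    (hαβ : ∀ s ∈ Ici s₀, |α s| + |β s| ≤ C / s ^ 20)
    (heq : ∀ s ∈ Ici s₀,
      1 = (1 + α s) * z'' s / (1 + z' s ^ 2) + (1 / s + β s) * z' s) :
    ∃ c : ℝ, ∃ C' > (0 : ℝ), ∃ s₁, s₀ ≤ s₁ ∧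
      ∀ s ≥ s₁, |z s - (c + s ^ 2 / 2 - Real.log s)| ≤ C' / s := by
  have hα_decay : α =O[atTop] fun s ↦ s⁻¹ ^ 1 :=
    isBigO_inv_pow_of_abs_le_div_pow (by norm_num : 1 ≤ 20) <|
      (eventually_ge_atTop s₀).mono fun s hs ↦ by linarith [hαβ s hs, abs_nonneg (β s)]
  have hβ_decay : β =O[atTop] fun s ↦ s⁻¹ ^ 4 :=
    isBigO_inv_pow_of_abs_le_div_pow (by norm_num : 4 ≤ 20) <|
      (eventually_ge_atTop s₀).mono fun s hs ↦ by linarith [hαβ s hs, abs_nonneg (α s)]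
  obtain ⟨c, hc⟩ := graphical_translator_bowl_asymptotics_general one_pos
    (eventually_hasDerivAt_of_hasDerivWithinAt_Ici hz)
    (eventually_hasDerivAt_of_hasDerivWithinAt_Ici hz') (by simpa using hα_decay) hβ_decay
    ((eventually_ge_atTop s₀).mono heq)
  obtain ⟨C', hC', hbound⟩ := hc.exists_pos
  obtain ⟨s₁, hs₁⟩ := eventually_atTop.1 (hbound.bound.and (eventually_ge_atTop 0))
  refine ⟨c, C', hC', max s₀ s₁, le_max_left _ _, fun s hs ↦ ?_⟩
  obtain ⟨hle, hs_nonneg⟩ := hs₁ s (le_of_max_le_right hs)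
  simpa [div_eq_mul_inv, abs_of_nonneg hs_nonneg] using hle
end
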